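/- arXiv:1807.10121 — 5 statements merged into one kernel-verified Lean document; each statement's English description precedes it below -/
import Mathlib

section
/- Let p and n be distinct primes with n ≥ 3 odd, q = p^m with q odd, Q = q^n, and suppose that the multiplicative order of q modulo n is (n−1)/2. For r ∈ (Z/nZ)^× let χ(r) ∈ {1, −1} ⊆ F_q denote the Legendre symbol (r/n) regarded in F_q, let n* = (−1)^{(n−1)/2}·n regarded in F_q, and let s ∈ F_q satisfy s² = n*. For α ∈ F_Q^× with α ∉ F_q and Tr(α) ≠ 0, set δ = Σ_{r=1}^{n−1} χ(r) α^{q^r}. If s·δ ∉ {n·α − Tr(α), −(n·α − Tr(α))}, then α is 0-normal (a normal element) for F_Q/F_q with conventional minimal polynomial m_α(X) = X^n − 1; otherwise α is ((n−1)/2)-normal for F_Q/F_q and m_α = (X − 1)·p̃(X) for some monic irreducible p̃ ∈ F_q[X] of degree (n−1)/2 dividing X^n − 1. -/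
open Polynomial

/-!
Let `x ↦ x ^ q` make `L = F_Q` a module over `F_q[X]` (`lineval_eq_aeval`), so that the conventional
minimal polynomial `m` of `α` generates its annihilator and divides `X ^ n - 1`. The order of `q`
modulo `n` being `(n - 1) / 2`, the `n`-th cyclotomic polynomial is a product `P₁ * P₂` of two
irreducible polynomials of that degree (`exists_cyclotomic_eq_mul`). Since `∑ X ^ i = P₁ * P₂`
evaluates to the nonzero trace and `α` is not in `F_q`, only `(X - 1) * P₁`, `(X - 1) * P₂` and
`X ^ n - 1` are possible for `m` (`isMinPoly_cases`).

To tell them apart, consider `H_e = s * ∑ χ(r) X ^ r - e * (n - ∑ X ^ i)` for `e = ± 1`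
(`gaussPoly`), which kills `α` exactly when `s * δ = e * (n * α - Tr α)`. It vanishes at `1`. At a
primitive `n`-th root of unity its value is `s * g - e * n`, where `g` is a quadratic Gauss sum; as
`g ^ 2 = n* = s ^ 2`, one has `s * g = ± n`. Hence each `(X - 1) * Pᵢ` divides `H_1` or `H_{-1}`
(`dvd_gaussPoly_or`), while `X ^ n - 1` divides neither, because these are nonzero of degree less
than `n` (`not_X_pow_sub_one_dvd_gaussPoly`). So `m ≠ X ^ n - 1` if and only if `H_1` or `H_{-1}`
kills `α`.

Finally `α` is `k`-normal with `k = n - deg m` (`IsMinPoly.isKNormal`): modulo `X ^ n - 1` the map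
`x ↦ g_x` is `F_q[X]`-linear, so `f` kills `α` if and only if `X ^ n - 1` divides `f * g_α`. The
gcd of `g_α` and `X ^ n - 1` has coefficients in `F_q`, being stable under Frobenius, and its
cofactor in `X ^ n - 1` is therefore `m`.
-/

/-- Evaluation of the `q`-linearized polynomial associated to `f`:
if `f = Σ aᵢ Xⁱ` then `lineval q f α = Σ aᵢ α^(q^i)` (i.e. `f(φ_q)(α)`). -/
noncomputable def lineval {Fq FQ : Type*} [CommSemiring Fq] [CommSemiring FQ] [Algebra Fq FQ]
    (q : ℕ) (f : Polynomial Fq) (α : FQ) : FQ :=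
  f.sum fun i a => algebraMap Fq FQ a * α ^ q ^ i

/-- `g_α(X) = Σ_{i=0}^{n-1} α^(q^i) X^(n-1-i) ∈ F_Q[X]`. -/
noncomputable def gpoly {FQ : Type*} [CommSemiring FQ] (q n : ℕ) (α : FQ) : Polynomial FQ :=
  ∑ i ∈ Finset.range n, Polynomial.C (α ^ q ^ i) * Polynomial.X ^ (n - 1 - i)

/-- `α` is `k`-normal for `F_Q/F_q`: `deg gcd(g_α(X), Xⁿ - 1) = k` in `F_Q[X]`. -/
def IsKNormal {FQ : Type*} [Field FQ] (q n k : ℕ) (α : FQ) : Prop :=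
  letI := Classical.decEq (Polynomial FQ)
  (EuclideanDomain.gcd (gpoly q n α) (Polynomial.X ^ n - 1)).natDegree = k

/-- `m` is the conventional minimal polynomial of `α`: the monic generator of the ideal
`{f ∈ F_q[X] : f(φ_q)(α) = 0}`. -/
def IsMinPoly {Fq FQ : Type*} [CommSemiring Fq] [CommSemiring FQ] [Algebra Fq FQ]
    (q : ℕ) (α : FQ) (m : Polynomial Fq) : Prop :=
  m.Monic ∧ lineval q m α = 0 ∧ ∀ g : Polynomial Fq, lineval q g α = 0 → m ∣ g

/-! ### Linearized polynomials and the polynomials `g_x` -/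

section Frobenius

variable {K L : Type*} [Field K] [Fintype K] [Field L] [Algebra K L] {q n : ℕ}

/-- The image of `K` already accounts for all the roots of `X ^ q - X` in `L`. -/
lemma mem_range_of_pow_card [Finite L] (hK : Fintype.card K = q) {x : L} (hx : x ^ q = x) :
    x ∈ Set.range (algebraMap K L) := by
  classical
  have hq : 1 < q := hK ▸ Fintype.one_lt_card
  have hne : (X ^ q - X : L[X]) ≠ 0 := FiniteField.X_pow_card_sub_X_ne_zero L hq
  have hsub : Finset.univ.image (algebraMap K L) ⊆ (X ^ q - X : L[X]).roots.toFinset := by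
    intro y hy
    obtain ⟨a, -, rfl⟩ := Finset.mem_image.mp hy
    rw [Multiset.mem_toFinset, mem_roots hne]
    simp [← map_pow, ← hK, FiniteField.pow_card]
  have hcard : (X ^ q - X : L[X]).roots.toFinset.card ≤
      (Finset.univ.image (algebraMap K L)).card := by
    rw [Finset.card_image_of_injective _ (algebraMap K L).injective, Finset.card_univ, hK]
    refine (Multiset.toFinset_card_le _).trans ((card_roots' _).trans ?_)
    rw [FiniteField.X_pow_card_sub_X_natDegree_eq L hq]
  have hxr : x ∈ (X ^ q - X : L[X]).roots.toFinset := by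
    rw [Multiset.mem_toFinset, mem_roots hne]
    simp [hx]
  rw [← Finset.eq_of_subset_of_card_le hsub hcard] at hxr
  obtain ⟨a, -, ha⟩ := Finset.mem_image.mp hxr
  exact ⟨a, ha⟩

/-- Evaluation of linearized polynomials is the `K[X]`-module structure on `L` in which `X` acts as
the Frobenius `x ↦ x ^ q`. -/
lemma lineval_eq_aeval (hK : Fintype.card K = q) (f : K[X]) (x : L) :
    lineval q f x = aeval (FiniteField.frobeniusAlgHom K L).toLinearMap f x := by
  subst hK
  have hpow (i : ℕ) : ((FiniteField.frobeniusAlgHom K L).toLinearMap ^ i) x =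
      x ^ Fintype.card K ^ i := by
    rw [Module.End.pow_apply, AlgHom.coe_toLinearMap, FiniteField.coe_frobeniusAlgHom, pow_iterate]
  rw [lineval, aeval_eq_sum_range, sum_over_range _ (by simp), LinearMap.sum_apply]
  simp [hpow, Algebra.smul_def]

lemma lineval_add (hK : Fintype.card K = q) (f g : K[X]) (x : L) :
    lineval q (f + g) x = lineval q f x + lineval q g x := by
  simp [lineval_eq_aeval hK]

lemma lineval_sub (hK : Fintype.card K = q) (f g : K[X]) (x : L) :
    lineval q (f - g) x = lineval q f x - lineval q g x := by
  simp [lineval_eq_aeval hK]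

lemma lineval_mul (hK : Fintype.card K = q) (f g : K[X]) (x : L) :
    lineval q (f * g) x = lineval q f (lineval q g x) := by
  simp [lineval_eq_aeval hK]

lemma lineval_zero_right (hK : Fintype.card K = q) (f : K[X]) : lineval q f (0 : L) = 0 := by
  simp [lineval_eq_aeval hK]

lemma lineval_eq_zero_of_dvd (hK : Fintype.card K = q) {f g : K[X]} {x : L} (h : f ∣ g)
    (hf : lineval q f x = 0) : lineval q g x = 0 := by
  obtain ⟨u, rfl⟩ := h
  rw [mul_comm, lineval_mul hK, hf, lineval_zero_right hK]

omit [Fintype K] in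
lemma lineval_C_mul_X_pow (a : K) (i : ℕ) (x : L) :
    lineval q (C a * X ^ i) x = algebraMap K L a * x ^ q ^ i := by
  rw [lineval, C_mul_X_pow_eq_monomial, sum_monomial_index _ _ (by simp)]

lemma lineval_sum (hK : Fintype.card K = q) {ι : Type*} (t : Finset ι) (f : ι → K[X]) (x : L) :
    lineval q (∑ i ∈ t, f i) x = ∑ i ∈ t, lineval q (f i) x := by
  simp [lineval_eq_aeval hK]

lemma add_pow_card_pow (hK : Fintype.card K = q) (x y : L) (i : ℕ) :
    (x + y) ^ q ^ i = x ^ q ^ i + y ^ q ^ i := by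
  have h (z : L) : z ^ q ^ i =
      aeval (FiniteField.frobeniusAlgHom K L).toLinearMap (C 1 * X ^ i : K[X]) z := by
    rw [← lineval_eq_aeval hK, lineval_C_mul_X_pow, map_one, one_mul]
  rw [h, h, h, map_add]

lemma gpoly_add (hK : Fintype.card K = q) (x y : L) :
    gpoly q n (x + y) = gpoly q n x + gpoly q n y := by
  simp [gpoly, add_pow_card_pow hK, add_mul, Finset.sum_add_distrib]

lemma gpoly_smul (hK : Fintype.card K = q) (a : K) (x : L) :
    gpoly q n (algebraMap K L a * x) = C (algebraMap K L a) * gpoly q n x := by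
  simp only [gpoly, Finset.mul_sum]
  refine Finset.sum_congr rfl fun i _ => ?_
  rw [mul_pow, ← map_pow, ← hK, FiniteField.pow_card_pow, C_mul, mul_assoc]

/-- Multiplication by `X` acts on the polynomials `g_x` modulo `X ^ n - 1` as the Frobenius on
`x`. -/
lemma X_mul_gpoly (hn : 0 < n) {x : L} (hx : x ^ q ^ n = x) :
    X * gpoly q n x = gpoly q n (x ^ q) + C x * (X ^ n - 1) := by
  obtain ⟨k, rfl⟩ : ∃ k, n = k + 1 := ⟨n - 1, by omega⟩
  rw [gpoly, gpoly, Finset.sum_range_succ', Finset.sum_range_succ, mul_add, Finset.mul_sum]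
  have h1 : ∑ i ∈ Finset.range k, X * (C (x ^ q ^ (i + 1)) * X ^ (k + 1 - 1 - (i + 1))) =
      ∑ i ∈ Finset.range k, C ((x ^ q) ^ q ^ i) * X ^ (k + 1 - 1 - i) := by
    refine Finset.sum_congr rfl fun i hi => ?_
    have hi' := Finset.mem_range.mp hi
    rw [← pow_mul, ← pow_succ', show k + 1 - 1 - i = (k + 1 - 1 - (i + 1)) + 1 by omega, pow_succ X]
    ring
  rw [h1, ← pow_mul, ← pow_succ', hx]
  simp
  ring

lemma gpoly_degree_lt (hn : 0 < n) (x : L) : (gpoly q n x).degree < n := by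
  refine (degree_sum_le _ _).trans_lt ?_
  rw [Finset.sup_lt_iff (by simp)]
  intro i _
  refine (degree_C_mul_X_pow_le _ _).trans_lt ?_
  exact_mod_cast (by omega : n - 1 - i < n)

lemma gpoly_coeff (hn : 0 < n) (x : L) : (gpoly q n x).coeff (n - 1) = x := by
  rw [gpoly, finsetSum_coeff, Finset.sum_eq_single 0]
  · simp
  · intro i hi hi0
    have := Finset.mem_range.mp hi
    rw [coeff_C_mul_X_pow, if_neg (by omega)]
  · intro h
    exact absurd (Finset.mem_range.mpr hn) h

lemma X_pow_sub_one_dvd_gpoly_iff (hK : Fintype.card K = q) (hn : 0 < n) (x : L) :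
    X ^ n - 1 ∣ gpoly q n x ↔ x = 0 := by
  constructor
  · intro h
    have h0 : gpoly q n x = 0 := by
      refine eq_zero_of_dvd_of_degree_lt h ?_
      rw [← C_1, degree_X_pow_sub_C hn]
      exact gpoly_degree_lt hn x
    rw [← gpoly_coeff (q := q) hn x, h0, coeff_zero]
  · intro h
    have h0 : gpoly q n (0 : L) = 0 := by
      simpa using gpoly_smul (n := n) hK 0 (0 : L)
    rw [h, h0]
    exact dvd_zero _

/-- The assignment `x ↦ g_x mod X ^ n - 1` is `K[X]`-linear, for the linearized action on `L`. -/
lemma dvd_mul_gpoly_sub_gpoly (hK : Fintype.card K = q) (hn : 0 < n)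
    (hL : ∀ x : L, x ^ q ^ n = x) (f : K[X]) (x : L) :
    X ^ n - 1 ∣ f.map (algebraMap K L) * gpoly q n x - gpoly q n (lineval q f x) := by
  induction f using Polynomial.induction_on' generalizing x with
  | add f g hf hg =>
    rw [lineval_add hK, gpoly_add hK, Polynomial.map_add]
    convert dvd_add (hf x) (hg x) using 1
    ring
  | monomial i a =>
    rw [← C_mul_X_pow_eq_monomial, lineval_C_mul_X_pow, gpoly_smul hK]
    simp only [Polynomial.map_mul, Polynomial.map_pow, map_C, map_X]
    rw [mul_assoc, ← mul_sub]
    refine Dvd.dvd.mul_left ?_ _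
    induction i generalizing x with
    | zero => simp
    | succ i ih =>
      rw [pow_succ, mul_assoc, X_mul_gpoly hn (hL x), pow_succ' q, pow_mul]
      convert dvd_add (ih (x ^ q)) (dvd_mul_left (X ^ n - 1) (X ^ i * C x)) using 1
      ring

lemma lineval_eq_zero_iff (hK : Fintype.card K = q) (hn : 0 < n)
    (hL : ∀ x : L, x ^ q ^ n = x) (f : K[X]) (x : L) :
    lineval q f x = 0 ↔ X ^ n - 1 ∣ f.map (algebraMap K L) * gpoly q n x := by
  rw [← X_pow_sub_one_dvd_gpoly_iff hK hn]
  exact (dvd_iff_dvd_of_dvd_sub (dvd_mul_gpoly_sub_gpoly hK hn hL f x)).symm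

/-- The monic greatest common divisor of `g_x` and `X ^ n - 1` is fixed by the Frobenius on
coefficients, because that Frobenius sends `g_x` to `X * g_x` modulo `X ^ n - 1`. -/
lemma exists_map_eq_of_isGCD [Finite L] (hK : Fintype.card K = q) (hn : 0 < n)
    (hL : ∀ x : L, x ^ q ^ n = x) (x : L) {D : L[X]} (hD : D.Monic) (h1 : D ∣ gpoly q n x)
    (h2 : D ∣ X ^ n - 1) (h3 : ∀ E, E ∣ gpoly q n x → E ∣ X ^ n - 1 → E ∣ D) :
    ∃ D₀ : K[X], D₀.map (algebraMap K L) = D := by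
  set σ : L →+* L := (FiniteField.frobeniusAlgHom K L).toRingHom with hσ
  have hσx (y : L) : σ y = y ^ q := by rw [← hK]; rfl
  have hg : (gpoly q n x).map σ = gpoly q n (x ^ q) := by
    simp only [gpoly, Polynomial.map_sum, Polynomial.map_mul, Polynomial.map_pow, map_C, map_X,
      hσx]
    refine Finset.sum_congr rfl fun i _ => ?_
    rw [pow_right_comm]
  have h2' : D.map σ ∣ X ^ n - 1 := by simpa using Polynomial.map_dvd σ h2
  have hcop : IsCoprime (D.map σ) X := by
    refine IsCoprime.of_isCoprime_of_dvd_left ?_ h2'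
    obtain ⟨k, rfl⟩ : ∃ k, n = k + 1 := ⟨n - 1, by omega⟩
    exact ⟨-1, X ^ k, by ring⟩
  have h1' : D.map σ ∣ gpoly q n x := by
    refine hcop.dvd_of_dvd_mul_left ?_
    rw [X_mul_gpoly hn (hL x), ← hg]
    exact dvd_add (Polynomial.map_dvd σ h1) (h2'.mul_left _)
  have hfix : D.map σ = D :=
    eq_of_monic_of_associated (hD.map σ) hD
      (associated_of_dvd_of_natDegree_le (h3 _ h1' h2') hD.ne_zero (by simp))
  have : D ∈ lifts (algebraMap K L) := by
    rw [lifts_iff_coeff_lifts]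
    intro i
    refine mem_range_of_pow_card hK ?_
    rw [← hσx, ← coeff_map, hfix]
  exact (mem_lifts _).mp this

/-- `x` is `k`-normal with `k = n - deg m`, for `m` the conventional minimal polynomial of `x`. -/
theorem IsMinPoly.isKNormal [Finite L] (hK : Fintype.card K = q) (hn : 0 < n)
    (hL : ∀ x : L, x ^ q ^ n = x) {x : L} {m : K[X]} (hm : IsMinPoly q x m) :
    IsKNormal q n (n - m.natDegree) x := by
  classical
  obtain ⟨hmon, hmx, hmdvd⟩ := hm
  rw [lineval_eq_zero_iff hK hn hL] at hmx
  have hP : (X ^ n - 1 : L[X]).Monic := monic_X_pow_sub_C 1 hn.ne'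
  have hPd : (X ^ n - 1 : L[X]).natDegree = n := natDegree_X_pow_sub_C
  unfold IsKNormal
  let _ : DecidableEq L[X] := Classical.decEq _
  change (EuclideanDomain.gcd (gpoly q n x) (X ^ n - 1)).natDegree = _
  set G := EuclideanDomain.gcd (gpoly q n x) (X ^ n - 1) with hG
  have hG1 : G ∣ gpoly q n x := EuclideanDomain.gcd_dvd_left _ _
  have hG2 : G ∣ X ^ n - 1 := EuclideanDomain.gcd_dvd_right _ _
  have hG0 : G ≠ 0 := fun h => hP.ne_zero (zero_dvd_iff.mp (h ▸ hG2))
  have hass : Associated (normalize G) G := normalize_associated G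
  obtain ⟨D₀, hD₀⟩ := exists_map_eq_of_isGCD hK hn hL x (monic_normalize hG0)
    (hass.dvd.trans hG1) (hass.dvd.trans hG2)
    (fun E h1 h2 => (EuclideanDomain.dvd_gcd h1 h2).trans hass.symm.dvd)
  have hdeg : G.natDegree = D₀.natDegree := by
    rw [← natDegree_map (algebraMap K L), hD₀]
    exact (natDegree_eq_of_degree_eq (degree_eq_degree_of_associated hass)).symm
  have hDmap : Associated (D₀.map (algebraMap K L)) G := hD₀ ▸ hass
  have hD₀dvd : D₀ ∣ X ^ n - 1 := by
    rw [← map_dvd_map' (algebraMap K L)]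
    simpa using hDmap.dvd.trans hG2
  obtain ⟨E₀, hE₀⟩ := hD₀dvd
  have hE₀' : (X ^ n - 1 : L[X]) = D₀.map (algebraMap K L) * E₀.map (algebraMap K L) := by
    rw [← Polynomial.map_mul, ← hE₀]
    simp
  have hsum : D₀.natDegree + E₀.natDegree = n := by
    rw [← hPd, hE₀', natDegree_mul (left_ne_zero_of_mul (hE₀' ▸ hP.ne_zero))
      (right_ne_zero_of_mul (hE₀' ▸ hP.ne_zero)), natDegree_map, natDegree_map]
  have hE₀ne : E₀ ≠ 0 := by
    rintro rfl
    simp [hE₀'] at hP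
  -- The cofactor `E₀` of the gcd annihilates `x`.
  have h1 : m ∣ E₀ := by
    refine hmdvd _ ((lineval_eq_zero_iff hK hn hL _ _).mpr ?_)
    rw [hE₀', mul_comm]
    exact mul_dvd_mul_left _ (hDmap.dvd.trans hG1)
  -- Bézout for the gcd: `E₀` divides every polynomial annihilating `x`.
  have h2 : E₀ ∣ m := by
    rw [← map_dvd_map' (algebraMap K L)]
    have hb : X ^ n - 1 ∣ m.map (algebraMap K L) * G := by
      rw [hG, EuclideanDomain.gcd_eq_gcd_ab, mul_add, ← mul_assoc]
      exact dvd_add (hmx.mul_right _) ((dvd_mul_right _ _).mul_left _)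
    have hb' := hb.trans (mul_dvd_mul_left _ hDmap.symm.dvd)
    rw [hE₀', mul_comm] at hb'
    exact (mul_dvd_mul_iff_right (left_ne_zero_of_mul (hE₀' ▸ hP.ne_zero))).mp hb'
  have := natDegree_le_of_dvd h1 hE₀ne
  have := natDegree_le_of_dvd h2 hmon.ne_zero
  omega

end Frobenius

/-! ### Gauss sums and the criterion polynomials -/

section Factor

variable {K : Type*} [Field K]

lemma sum_zmod_eq_sum_range (n : ℕ) [NeZero n] {M : Type*} [AddCommMonoid M] (f : ZMod n → M) :
    ∑ a, f a = ∑ i ∈ Finset.range n, f (i : ZMod n) := by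
  refine Finset.sum_bij' (fun a _ => a.val) (fun i _ => (i : ZMod n)) ?_ ?_ ?_ ?_ ?_
  · intro a _
    exact Finset.mem_range.mpr (ZMod.val_lt a)
  · simp
  · simp
  · intro i hi
    exact ZMod.val_cast_of_lt (Finset.mem_range.mp hi)
  · simp

/-- The polynomial `s * ∑ χ(r) X ^ r - e * (n - ∑ X ^ i)`, where `χ` is the Legendre symbol modulo
`n`; for `e = ± 1` it annihilates `α` exactly when `s * δ = ± (n * α - Tr α)`. -/
noncomputable def gaussPoly (n : ℕ) [Fact n.Prime] (s e : K) : K[X] :=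
  ∑ r ∈ Finset.Icc 1 (n - 1), C (s * ((legendreSym n r : ℤ) : K)) * X ^ r -
    C e * (C (n : K) - ∑ i ∈ Finset.range n, X ^ i)

variable {n : ℕ} [hn : Fact n.Prime]

/-- The Legendre symbol as a multiplicative character with values in a field. -/
noncomputable def legendreChar (n : ℕ) [Fact n.Prime] (F : Type*) [Field F] :
    MulChar (ZMod n) F :=
  (quadraticChar (ZMod n)).ringHomComp (Int.castRingHom F)

/-- The quadratic Gauss sum at a primitive `n`-th root of unity `ζ` squares to `n*`. The term `r = 0`
may be omitted because the Legendre symbol vanishes there. -/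
lemma gaussSum_sq_eq {F : Type*} [Field F] (h2 : (2 : F) ≠ 0) (hodd : Odd n) {ζ : F}
    (hζ : IsPrimitiveRoot ζ n) :
    (∑ r ∈ Finset.Icc 1 (n - 1), ((legendreSym n r : ℤ) : F) * ζ ^ r) ^ 2 =
      (-1) ^ ((n - 1) / 2) * (n : F) := by
  have hn2 : ringChar (ZMod n) ≠ 2 := by
    rw [ZMod.ringChar_zmod_n]
    rintro rfl
    exact absurd hodd (by decide)
  have hψ := AddChar.zmodChar_primitive_of_primitive_root n hζ
  obtain ⟨a, ha⟩ := quadraticChar_exists_neg_one' hn2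
  have hχ1 : legendreChar n F ≠ 1 := by
    intro h
    have h' := congrArg (fun χ : MulChar (ZMod n) F => χ a) h
    simp only [legendreChar, MulChar.ringHomComp_apply, ha, MulChar.one_apply_coe] at h'
    simp at h'
    exact h2 (by linear_combination -h')
  have hsq := gaussSum_sq hχ1 ((quadraticChar_isQuadratic (ZMod n)).comp _) hψ
  have hsum : gaussSum (legendreChar n F)
      (AddChar.zmodChar n ((IsPrimitiveRoot.iff_def ζ n).mp hζ).left) =
      ∑ r ∈ Finset.Icc 1 (n - 1), ((legendreSym n r : ℤ) : F) * ζ ^ r := by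
    obtain ⟨k, hk⟩ : ∃ k, n = k + 1 := ⟨n - 1, by have := hn.out.pos; omega⟩
    have hr : Finset.range n = insert 0 (Finset.Icc 1 (n - 1)) := by
      ext i
      simp only [Finset.mem_range, Finset.mem_insert, Finset.mem_Icc]
      omega
    rw [gaussSum, sum_zmod_eq_sum_range, hr, Finset.sum_insert (by simp)]
    simp [AddChar.zmodChar_apply', legendreChar, MulChar.ringHomComp_apply, legendreSym]
  rw [hsum] at hsq
  rw [hsq, legendreChar, MulChar.ringHomComp_apply, quadraticChar_neg_one hn2, ZMod.card,
    ZMod.χ₄_eq_neg_one_pow (Nat.odd_iff.mp hodd)]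
  have : n / 2 = (n - 1) / 2 := by
    obtain ⟨k, rfl⟩ := hodd
    omega
  simp [this]

/-- The coefficient at `X ^ r` is `s * χ(r) + e` and `χ` takes both values `± 1`, so they cannot all
vanish when `2 * e ≠ 0`. -/
lemma gaussPoly_ne_zero (h2 : (2 : K) ≠ 0) (hodd : Odd n) (s : K) {e : K} (he : e ≠ 0) :
    gaussPoly n s e ≠ 0 := by
  intro h
  have hn2 : ringChar (ZMod n) ≠ 2 := by
    rw [ZMod.ringChar_zmod_n]
    rintro rfl
    exact absurd hodd (by decide)
  have hcoeff (a : (ZMod n)ˣ) : s * ((quadraticChar (ZMod n) a : ℤ) : K) + e = 0 := by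
    have hlt := ZMod.val_lt (a : ZMod n)
    have hpos : 0 < (a : ZMod n).val := ZMod.val_pos.mpr a.ne_zero
    have hmem : (a : ZMod n).val ∈ Finset.Icc 1 (n - 1) := by
      rw [Finset.mem_Icc]
      omega
    have h' := congrArg (fun P : K[X] => P.coeff (a : ZMod n).val) h
    simp only [gaussPoly, coeff_sub, finsetSum_coeff, coeff_C_mul, coeff_X_pow, coeff_zero,
      mul_ite, mul_one, mul_zero, Finset.sum_ite_eq, hmem, Finset.mem_range, hlt, if_true,
      coeff_C, hpos.ne', if_false, legendreSym] at h'
    simp at h'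
    rw [quadraticChar_apply]
    linear_combination h'
  obtain ⟨a, ha⟩ := quadraticChar_exists_neg_one' hn2
  have h1 := hcoeff 1
  have h3 := hcoeff a
  rw [ha] at h3
  simp at h1 h3
  have : 2 * e = 0 := by linear_combination h1 + h3
  simp_all

lemma gaussPoly_degree_lt (s e : K) : (gaussPoly n s e).degree < n := by
  have hpos := hn.out.pos
  have hX (i : ℕ) (hi : i < n) (a : K) : C a * X ^ i ∈ degreeLT K n :=
    mem_degreeLT.mpr ((degree_C_mul_X_pow_le _ _).trans_lt (by exact_mod_cast hi))
  rw [← mem_degreeLT]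
  refine Submodule.sub_mem _ (Submodule.sum_mem _ fun r hr => hX r ?_ _) ?_
  · have := Finset.mem_Icc.mp hr
    omega
  · rw [C_mul']
    refine Submodule.smul_mem _ _ (Submodule.sub_mem _ ?_ (Submodule.sum_mem _ fun i hi => ?_))
    · simpa using hX 0 hpos (n : K)
    · simpa using hX i (Finset.mem_range.mp hi) 1

lemma not_X_pow_sub_one_dvd_gaussPoly (h2 : (2 : K) ≠ 0) (hodd : Odd n) (s : K) {e : K}
    (he : e ≠ 0) : ¬ X ^ n - 1 ∣ gaussPoly n s e := by
  intro h
  refine gaussPoly_ne_zero h2 hodd s he (eq_zero_of_dvd_of_degree_lt h ?_)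
  rw [← C_1, degree_X_pow_sub_C hn.out.pos]
  exact gaussPoly_degree_lt s e

/-- An irreducible factor of the `n`-th cyclotomic polynomial divides one of the two polynomials
`gaussPoly n s (±1)`: at a primitive `n`-th root of unity the Gauss sum squares to `n* = s ^ 2`, so
`s` times the Gauss sum is `± n`. -/
lemma dvd_gaussPoly_or (h2 : (2 : K) ≠ 0) (hn0 : (n : K) ≠ 0) (hodd : Odd n) {s : K}
    (hs : s ^ 2 = (-1 : K) ^ ((n - 1) / 2) * (n : K)) {P : K[X]} (hP : Irreducible P)
    (hPn : P ∣ cyclotomic n K) : P ∣ gaussPoly n s 1 ∨ P ∣ gaussPoly n s (-1) := by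
  have : Fact (Irreducible P) := ⟨hP⟩
  set F := AdjoinRoot P
  set ζ : F := AdjoinRoot.root P
  have h2F : (2 : F) ≠ 0 := by
    rw [← map_ofNat (algebraMap K F) 2]
    exact (map_ne_zero (algebraMap K F)).mpr h2
  have hnF : (n : F) ≠ 0 := by
    simpa using (map_ne_zero (algebraMap K F)).mpr hn0
  have : NeZero (n : F) := ⟨hnF⟩
  have hdvd (f : K[X]) : P ∣ f ↔ aeval ζ f = 0 := by
    rw [AdjoinRoot.aeval_eq, AdjoinRoot.mk_eq_zero]
  have hcyc : aeval ζ (cyclotomic n K) = 0 := (hdvd _).mp hPn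
  have hζ : IsPrimitiveRoot ζ n := by
    rw [← isRoot_cyclotomic_iff, ← map_cyclotomic n (algebraMap K F), IsRoot.def, eval_map_algebraMap]
    exact hcyc
  have hT : ∑ i ∈ Finset.range n, ζ ^ i = 0 := by
    simpa [cyclotomic_prime] using hcyc
  set g := ∑ r ∈ Finset.Icc 1 (n - 1), ((legendreSym n r : ℤ) : F) * ζ ^ r with hg
  have hval (e : K) : aeval ζ (gaussPoly n s e) =
      algebraMap K F s * g - algebraMap K F e * n := by
    rw [hg, Finset.mul_sum]
    simp [gaussPoly, hT, mul_assoc, aeval_C]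
  have hg2 : g ^ 2 = (-1) ^ ((n - 1) / 2) * (n : F) := gaussSum_sq_eq h2F hodd hζ
  have hs2 : algebraMap K F s ^ 2 = (-1) ^ ((n - 1) / 2) * (n : F) := by
    rw [← map_pow, hs]
    simp
  have hsg : (algebraMap K F s * g) ^ 2 = (n : F) ^ 2 := by
    have hsign : ((-1 : F) ^ ((n - 1) / 2)) ^ 2 = 1 := by
      rw [← pow_mul, mul_comm, pow_mul]
      simp
    rw [mul_pow, hs2, hg2]
    linear_combination (n : F) ^ 2 * hsign
  rw [hdvd, hdvd, hval, hval]
  rcases sq_eq_sq_iff_eq_or_eq_neg.mp hsg with h | h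
  · left
    simp [h]
  · right
    rw [h, map_neg, map_one]
    ring

lemma X_sub_one_dvd_gaussPoly (hodd : Odd n) (s e : K) : X - 1 ∣ gaussPoly n s e := by
  have hn2 : ringChar (ZMod n) ≠ 2 := by
    rw [ZMod.ringChar_zmod_n]
    rintro rfl
    exact absurd hodd (by decide)
  have hpos := hn.out.pos
  have hr : Finset.range n = insert 0 (Finset.Icc 1 (n - 1)) := by
    ext i
    simp only [Finset.mem_range, Finset.mem_insert, Finset.mem_Icc]
    omega
  have h0 : ∑ r ∈ Finset.Icc 1 (n - 1), legendreSym n r = 0 := by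
    have h := quadraticChar_sum_zero hn2
    rw [sum_zmod_eq_sum_range, hr, Finset.sum_insert (by simp)] at h
    simpa [legendreSym] using h
  rw [← C_1, dvd_iff_isRoot, IsRoot.def]
  have h0' := congrArg (Int.cast : ℤ → K) h0
  push_cast at h0'
  simp [gaussPoly, eval_finsetSum, ← Finset.mul_sum, h0']

end Factor

/-! ### Minimal polynomials and divisors of `X ^ n - 1` -/

section Divisors

variable {K : Type*} [Field K]

/-- If `q` has order `(n - 1) / 2` modulo `n`, then the `n`-th cyclotomic polynomial over a field
with `q` elements is a product of two irreducible polynomials of equal degree. -/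
lemma exists_cyclotomic_eq_mul [Fintype K] {p m n q : ℕ} (hp : p.Prime) [hn : Fact n.Prime]
    (hne : n ≠ p) (hn3 : 3 ≤ n) (hodd : Odd n) (hq : q = p ^ m) (hK : Fintype.card K = q)
    (horder : orderOf (q : ZMod n) = (n - 1) / 2) :
    ∃ P₁ P₂ : K[X], P₁.Monic ∧ P₂.Monic ∧ Irreducible P₁ ∧ Irreducible P₂ ∧
      P₁.natDegree = (n - 1) / 2 ∧ P₂.natDegree = (n - 1) / 2 ∧ cyclotomic n K = P₁ * P₂ := by
  have : Fact p.Prime := ⟨hp⟩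
  have hcop : p.Coprime n := (Nat.coprime_primes hp hn.out).mpr hne.symm
  have hdeg (P : K[X]) (hP : Irreducible P) (hPn : P ∣ cyclotomic n K) :
      P.natDegree = (n - 1) / 2 := by
    rw [natDegree_of_dvd_cyclotomic_of_irreducible (hK.trans hq) hcop hPn hP, ← horder, hq,
      ← orderOf_units, ZMod.coe_unitOfCoprime]
  have hcyc : (cyclotomic n K).natDegree = n - 1 := by
    rw [natDegree_cyclotomic, Nat.totient_prime hn.out]
  have hcm := cyclotomic.monic n K
  obtain ⟨P₁, hm₁, hi₁, A, hA⟩ := exists_monic_irreducible_factor (cyclotomic n K)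
    (fun h => by have := natDegree_eq_zero_of_isUnit h; omega)
  have hd₁ := hdeg P₁ hi₁ ⟨A, hA⟩
  have hAm : A.Monic := hm₁.of_mul_monic_left (hA ▸ hcm)
  have hAd : A.natDegree = (n - 1) / 2 := by
    have h := hcyc
    rw [hA, hm₁.natDegree_mul hAm, hd₁] at h
    obtain ⟨k, rfl⟩ := hodd
    omega
  obtain ⟨P₂, hm₂, hi₂, hB⟩ := exists_monic_irreducible_factor A
    (fun h => by have := natDegree_eq_zero_of_isUnit h; omega)
  have hd₂ := hdeg P₂ hi₂ (hB.trans ⟨P₁, by rw [hA, mul_comm]⟩)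
  -- `P₂` divides the cofactor `A` and has the same degree.
  have hAP : P₂ = A := eq_of_monic_of_associated hm₂ hAm
    (associated_of_dvd_of_natDegree_le hB hAm.ne_zero (by omega))
  exact ⟨P₁, P₂, hm₁, hm₂, hi₁, hi₂, hd₁, hd₂, hAP ▸ hA⟩

lemma eq_of_monic_dvd_irreducible {P m : K[X]} (hP : Irreducible P) (hPm : P.Monic)
    (hm : m.Monic) (h : m ∣ P) : m = 1 ∨ m = P := by
  rcases hP.dvd_iff.mp h with h | h
  · exact .inl (hm.eq_one_of_isUnit h)
  · exact .inr (eq_of_monic_of_associated hm hPm h.symm)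

lemma eq_of_monic_dvd_mul {P₁ P₂ m : K[X]} (hi₁ : Irreducible P₁) (hi₂ : Irreducible P₂)
    (h₁ : P₁.Monic) (h₂ : P₂.Monic) (hm : m.Monic) (h : m ∣ P₁ * P₂) :
    m = 1 ∨ m = P₁ ∨ m = P₂ ∨ m = P₁ * P₂ := by
  by_cases hd : P₁ ∣ m
  · obtain ⟨u, rfl⟩ := hd
    have hu : u.Monic := h₁.of_mul_monic_left hm
    rcases eq_of_monic_dvd_irreducible hi₂ h₂ hu
      ((mul_dvd_mul_iff_left hi₁.ne_zero).mp h) with rfl | rfl <;> simp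
  · have hc : IsCoprime m P₁ := ((EuclideanDomain.dvd_or_coprime _ _ hi₁).resolve_left hd).symm
    rcases eq_of_monic_dvd_irreducible hi₂ h₂ hm (hc.dvd_of_dvd_mul_left h) with rfl | rfl <;> simp

lemma exists_isMinPoly [Fintype K] {L : Type*} [Field L] [Algebra K L] {q n : ℕ}
    (hK : Fintype.card K = q) (hn : 0 < n) (hL : ∀ x : L, x ^ q ^ n = x) (x : L) :
    ∃ m : K[X], IsMinPoly q x m ∧ m ∣ X ^ n - 1 := by
  classical
  let I : Ideal K[X] :=
    { carrier := {f | lineval q f x = 0}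
      add_mem' := fun {f g} hf hg => by
        simp only [Set.mem_ofPred_eq] at *
        rw [lineval_add hK, hf, hg, add_zero]
      zero_mem' := by simp [lineval]
      smul_mem' := fun c f hf => lineval_eq_zero_of_dvd hK (dvd_mul_left f c) hf }
  have hmemI (f : K[X]) : lineval q f x = 0 ↔ f ∈ I := Iff.rfl
  have hX : X ^ n - 1 ∈ I := by
    rw [← hmemI, lineval_eq_zero_iff hK hn hL]
    simp
  have hgen (f : K[X]) : f ∈ I ↔ Submodule.IsPrincipal.generator I ∣ f :=
    Submodule.IsPrincipal.mem_iff_generator_dvd I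
  set g := Submodule.IsPrincipal.generator I
  have hg0 : g ≠ 0 := fun h =>
    (monic_X_pow_sub_C (1 : K) hn.ne').ne_zero (zero_dvd_iff.mp (h ▸ (hgen _).mp hX))
  refine ⟨normalize g, ⟨monic_normalize hg0, ?_, fun f hf => ?_⟩, ?_⟩
  · exact (hmemI _).mpr ((hgen _).mpr (dvd_normalize_iff.mpr dvd_rfl))
  · exact normalize_dvd_iff.mpr ((hgen _).mp ((hmemI _).mp hf))
  · exact normalize_dvd_iff.mpr ((hgen _).mp hX)

/-- A conventional minimal polynomial of an element outside `K` with nonzero trace is divisible by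
`X - 1` (otherwise it would divide the cyclotomic polynomial, which evaluates to the trace), and is
not equal to it. -/
lemma isMinPoly_cases [Fintype K] {L : Type*} [Field L] [Finite L] [Algebra K L] {q n : ℕ}
    [Fact n.Prime] (hK : Fintype.card K = q) {x : L} (hx : x ∉ Set.range (algebraMap K L))
    (htr : ∑ i ∈ Finset.range n, x ^ q ^ i ≠ 0) {P₁ P₂ m : K[X]} (hi₁ : Irreducible P₁)
    (hi₂ : Irreducible P₂) (h₁ : P₁.Monic) (h₂ : P₂.Monic) (hc : cyclotomic n K = P₁ * P₂)
    (hm : IsMinPoly q x m) (hmd : m ∣ X ^ n - 1) :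
    m = (X - 1) * P₁ ∨ m = (X - 1) * P₂ ∨ m = X ^ n - 1 := by
  obtain ⟨hmon, hmx, -⟩ := hm
  have hmonX : (X - 1 : K[X]).Monic := monic_X_sub_C 1
  have hXP : (X - 1) * (P₁ * P₂) = X ^ n - 1 := by
    rw [← hc, mul_comm, cyclotomic_prime_mul_X_sub_one]
  have hX : X - 1 ∣ m := by
    by_contra hd
    have hcop : IsCoprime m (X - 1) :=
      ((EuclideanDomain.dvd_or_coprime _ _ (irreducible_X_sub_C (1 : K))).resolve_left hd).symm
    rw [← hXP, ← hc] at hmd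
    have h0 := lineval_eq_zero_of_dvd hK (hcop.dvd_of_dvd_mul_left hmd) hmx
    rw [cyclotomic_prime, lineval_sum hK] at h0
    refine htr ?_
    rw [← h0]
    refine Finset.sum_congr rfl fun i _ => ?_
    rw [← one_mul (X ^ i), ← C_1, lineval_C_mul_X_pow, map_one, one_mul]
  obtain ⟨u, rfl⟩ := hX
  have hu : u.Monic := hmonX.of_mul_monic_left hmon
  rw [← hXP] at hmd
  rcases eq_of_monic_dvd_mul hi₁ hi₂ h₁ h₂ hu
    ((mul_dvd_mul_iff_left hmonX.ne_zero).mp hmd) with rfl | rfl | rfl | rfl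
  · refine absurd (mem_range_of_pow_card hK (sub_eq_zero.mp ?_)) hx
    have e : ((X : K[X]) - 1) * 1 = C 1 * X ^ 1 - C 1 * X ^ 0 := by simp
    rw [e, lineval_sub hK, lineval_C_mul_X_pow, lineval_C_mul_X_pow] at hmx
    simpa using hmx
  · exact .inl rfl
  · exact .inr (.inl rfl)
  · exact .inr (.inr hXP)

lemma lineval_gaussPoly [Fintype K] {L : Type*} [Field L] [Algebra K L] {q n : ℕ}
    [Fact n.Prime] (hK : Fintype.card K = q) (s e : K) (x : L) :
    lineval q (gaussPoly n s e) x =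
      algebraMap K L s * (∑ r ∈ Finset.Icc 1 (n - 1),
        algebraMap K L ((legendreSym n r : ℤ) : K) * x ^ q ^ r) -
      algebraMap K L e * ((n : L) * x - ∑ i ∈ Finset.range n, x ^ q ^ i) := by
  have hC (a : K) (f : K[X]) : lineval q (C a * f) x = algebraMap K L a * lineval q f x := by
    rw [lineval_mul hK, ← mul_one (C a), ← pow_zero X, lineval_C_mul_X_pow, pow_zero, pow_one]
  have hXi (i : ℕ) : lineval q (X ^ i : K[X]) x = x ^ q ^ i := by
    rw [← one_mul (X ^ i), ← C_1, lineval_C_mul_X_pow, map_one, one_mul]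
  have hn : lineval q (C (n : K)) x = (n : L) * x := by
    rw [← mul_one (C (n : K)), ← pow_zero X, lineval_C_mul_X_pow]
    simp
  simp only [gaussPoly, lineval_sub hK, lineval_sum hK, hC, hXi, hn, Finset.mul_sum,
    map_mul, mul_assoc]

end Divisors

theorem stmt_15 (p m n q : ℕ) (hp : p.Prime) [hnp : Fact n.Prime] (hne : n ≠ p)
    (hn3 : 3 ≤ n) (hnodd : Odd n) (hm : 0 < m) (hq : q = p ^ m) (hqodd : Odd q)
    {Fq FQ : Type*} [Field Fq] [Fintype Fq] [Field FQ] [Fintype FQ] [Algebra Fq FQ]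
    (hcard : Fintype.card Fq = q) (hcardQ : Fintype.card FQ = q ^ n)
    (horder : orderOf (q : ZMod n) = (n - 1) / 2)
    -- s is a square root in F_q of n* = (-1)^((n-1)/2)·n
    (s : Fq) (hs : s ^ 2 = (-1 : Fq) ^ ((n - 1) / 2) * (n : Fq))
    (α : FQ) (hα : α ≠ 0)
    (hα2 : α ∉ Set.range (algebraMap Fq FQ))
    (htr : ∑ i ∈ Finset.range n, α ^ q ^ i ≠ 0) :
    let Tr : FQ := ∑ i ∈ Finset.range n, α ^ q ^ i
    let δ : FQ := ∑ r ∈ Finset.Icc 1 (n - 1),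
      algebraMap Fq FQ ((legendreSym n r : ℤ) : Fq) * α ^ q ^ r
    ((algebraMap Fq FQ s * δ ≠ (n : FQ) * α - Tr ∧
        algebraMap Fq FQ s * δ ≠ -((n : FQ) * α - Tr)) →
      IsKNormal q n 0 α ∧ IsMinPoly q α (Polynomial.X ^ n - 1 : Polynomial Fq)) ∧
    ((algebraMap Fq FQ s * δ = (n : FQ) * α - Tr ∨
        algebraMap Fq FQ s * δ = -((n : FQ) * α - Tr)) →
      IsKNormal q n ((n - 1) / 2) α ∧
        ∃ m₂ : Polynomial Fq, m₂.Monic ∧ Irreducible m₂ ∧ m₂.natDegree = (n - 1) / 2 ∧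
          m₂ ∣ (Polynomial.X ^ n - 1) ∧
          IsMinPoly q α ((Polynomial.X - 1) * m₂)) := by
  intro Tr δ
  have hn0 : 0 < n := by omega
  have hL (x : FQ) : x ^ q ^ n = x := by rw [← hcardQ, FiniteField.pow_card]
  -- A natural number prime to `q` is nonzero in `Fq`.
  have hcast (k : ℕ) (hk : Nat.Coprime k q) : (k : Fq) ≠ 0 := by
    intro h
    have hc := (Nat.isCoprime_iff_coprime.mpr hk).map (Int.castRingHom Fq)
    have hq0 : (q : Fq) = 0 := by rw [← hcard, FiniteField.cast_card_eq_zero]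
    simp [h, hq0] at hc
  have h2 : (2 : Fq) ≠ 0 := by exact_mod_cast hcast 2 (Nat.coprime_two_left.mpr hqodd)
  have hnF : (n : Fq) ≠ 0 :=
    hcast n (hq ▸ Nat.Coprime.pow_right m ((Nat.coprime_primes hnp.out hp).mpr hne))
  obtain ⟨P₁, P₂, hm₁, hm₂, hi₁, hi₂, hd₁, hd₂, hcyc⟩ :=
    exists_cyclotomic_eq_mul (K := Fq) hp hne hn3 hnodd hq hcard horder
  obtain ⟨M, hM, hMd⟩ := exists_isMinPoly hcard hn0 hL α
  have hcases := isMinPoly_cases hcard hα2 htr hi₁ hi₂ hm₁ hm₂ hcyc hM hMd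
  have hnorm := hM.isKNormal hcard hn0 hL
  have hpos : lineval q (gaussPoly n s 1) α = 0 ↔
      algebraMap Fq FQ s * δ = (n : FQ) * α - Tr := by
    rw [lineval_gaussPoly hcard, map_one, one_mul, sub_eq_zero]
  have hneg : lineval q (gaussPoly n s (-1)) α = 0 ↔
      algebraMap Fq FQ s * δ = -((n : FQ) * α - Tr) := by
    rw [lineval_gaussPoly hcard, map_neg, map_one, neg_one_mul, sub_eq_zero]
  have hPX {P : Fq[X]} (hP : P ∣ cyclotomic n Fq) : P ∣ X ^ n - 1 :=
    hP.trans (cyclotomic.dvd_X_pow_sub_one n Fq)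
  -- `X - 1` is coprime to an irreducible factor of the cyclotomic polynomial, since the latter has
  -- the value `n ≠ 0` at `1`.
  have hcop {P : Fq[X]} (hP : P ∣ cyclotomic n Fq) : IsCoprime (X - 1) P := by
    refine IsCoprime.of_isCoprime_of_dvd_right ?_ hP
    refine (EuclideanDomain.dvd_or_coprime _ _ (irreducible_X_sub_C (1 : Fq))).resolve_left ?_
    rw [dvd_iff_isRoot, IsRoot.def, eval_one_cyclotomic_prime]
    exact hnF
  have hmul {P : Fq[X]} (hi : Irreducible P) (hP : P ∣ cyclotomic n Fq) :
      (X - 1) * P ∣ gaussPoly n s 1 ∨ (X - 1) * P ∣ gaussPoly n s (-1) :=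
    (dvd_gaussPoly_or h2 hnF hnodd hs hi hP).imp
      ((hcop hP).mul_dvd (X_sub_one_dvd_gaussPoly hnodd s _))
      ((hcop hP).mul_dvd (X_sub_one_dvd_gaussPoly hnodd s _))
  constructor
  · rintro ⟨h₁, h₂⟩
    have hno {P : Fq[X]} (hi : Irreducible P) (hP : P ∣ cyclotomic n Fq) :
        M ≠ (X - 1) * P := by
      intro h
      rcases hmul hi hP with hd | hd
      · exact h₁ (hpos.mp (lineval_eq_zero_of_dvd hcard (h ▸ hd) hM.2.1))
      · exact h₂ (hneg.mp (lineval_eq_zero_of_dvd hcard (h ▸ hd) hM.2.1))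
    have hMX : M = X ^ n - 1 := (hcases.resolve_left (hno hi₁ ⟨_, hcyc⟩)).resolve_left
      (hno hi₂ ⟨P₁, by rw [hcyc, mul_comm]⟩)
    have hdeg : n - M.natDegree = 0 := by
      rw [hMX, ← C_1, natDegree_X_pow_sub_C, Nat.sub_self]
    exact ⟨hdeg ▸ hnorm, hMX ▸ hM⟩
  · intro h
    have hMX : M ≠ X ^ n - 1 := by
      rintro rfl
      rcases h with h | h
      · exact not_X_pow_sub_one_dvd_gaussPoly h2 hnodd s one_ne_zero (hM.2.2 _ (hpos.mpr h))
      · exact not_X_pow_sub_one_dvd_gaussPoly h2 hnodd s (neg_ne_zero.mpr one_ne_zero)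
          (hM.2.2 _ (hneg.mpr h))
    obtain ⟨P, hmP, hiP, hdP, hPc, rfl⟩ : ∃ P : Fq[X], P.Monic ∧ Irreducible P ∧
        P.natDegree = (n - 1) / 2 ∧ P ∣ cyclotomic n Fq ∧ M = (X - 1) * P := by
      rcases hcases with h | h | h
      · exact ⟨P₁, hm₁, hi₁, hd₁, ⟨_, hcyc⟩, h⟩
      · exact ⟨P₂, hm₂, hi₂, hd₂, ⟨P₁, by rw [hcyc, mul_comm]⟩, h⟩
      · exact absurd h hMX
    have hdeg : n - ((X - 1) * P).natDegree = (n - 1) / 2 := by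
      rw [← C_1, (monic_X_sub_C 1).natDegree_mul hmP, natDegree_X_sub_C, hdP]
      obtain ⟨k, rfl⟩ := hnodd
      omega
    exact ⟨hdeg ▸ hnorm, P, hmP, hiP, hdP, hPX hPc, hM⟩
end

section
/- Let n be an odd prime ≥ 3, q = 2^m, Q = q^n, and suppose that the multiplicative order of q modulo n is (n−1)/2. Let D = ⟨q⟩ be the subgroup of squares in (Z/nZ)^× and D′ its nontrivial coset. Let E be a field extension of F_Q containing a primitive n-th root of unity ζ, and set B = Σ_{r∈D′} ζ^r ∈ E (B lies in the image of F_q in E). For α ∈ F_Q^× with α ∉ F_q and Tr(α) = 0, set ε = Σ_{r∈D} α^{q^r}. If ε ∉ {B·α, (B+1)·α} (computed in E), then α is 1-normal for F_Q/F_q with conventional minimal polynomial m_α(X) = X^{n−1} + ⋯ + X + 1; otherwise α is ((n+1)/2)-normal for F_Q/F_q and m_α is a monic irreducible polynomial of degree (n−1)/2 dividing X^n − 1 in F_q[X]. -/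
/-!
The proof is a finite Fourier transform. For `β ∈ F_Q` and an `n`-th root of unity `x ∈ E` let
`R(x, β) = g_β(x)` be the Lagrange resolvent. It is `F_q`-linear in `β` and satisfies
`R(x, β^q) = x R(x, β)`, hence `R(x, f(φ_q)(β)) = f(x) R(x, β)` for `f ∈ F_q[X]`
(`lagrangeRes_lineval`). The resolvents at all `n`-th roots of unity determine `β`, because
`deg g_β < n` (`eq_zero_of_lagrangeRes`). So everything is governed by the support
`T = {s ∈ ℤ/n : R(ζ^s, α) ≠ 0}`: a polynomial `f` annihilates `α` iff it vanishes on `ζ^s` for all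
`s ∈ T` (`lineval_eq_zero_iff`), and `α` is `(n - |T|)`-normal (`isKNormal_card`).

As `R(x, β)^q = x^q R(x^q, β)`, the support is stable under multiplication by `q`; it omits `0`
since `Tr α = 0`, and it is nonempty since `α ≠ 0`. Hence `T` is `D`, `D'` or `D ∪ D'`. In the
first two cases `m_α` is the minimal polynomial over `F_q` of some `ζ^s`, an irreducible factor of
the `n`-th cyclotomic polynomial and therefore of degree `ord_n(q) = (n-1)/2`
(`isMinPoly_of_support`); in the last one it is the cyclotomic polynomial
(`isMinPoly_of_full_support`).

Finally `ε = e(φ_q)(α)` with `e = Σ_{r ∈ D} X^r`, and `e(ζ^s)` is `B + 1` for `s ∈ D` and `B` for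
`s ∈ D'`. Comparing resolvents, `ε = Bα` iff `T = D'` and `ε = (B + 1)α` iff `T = D`.
-/

open Polynomial

/-! ### Lagrange resolvents -/

section Resolvent

variable {Fq FQ E : Type*} [Field Fq] [Field FQ] [Field E]
  [Algebra Fq FQ] [Algebra FQ E] [Algebra Fq E] [IsScalarTower Fq FQ E]

/-- The Lagrange resolvent `Σ_{i<n} β^(q^i) x^(n-1-i)`, i.e. the value of `g_β` at `x`. -/
noncomputable def lagrangeRes (q n : ℕ) (x : E) (β : FQ) : E :=
  aeval x (gpoly q n β)

lemma lagrangeRes_eq_sum (q n : ℕ) (x : E) (β : FQ) :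
    lagrangeRes q n x β =
      ∑ i ∈ Finset.range n, algebraMap FQ E β ^ q ^ i * x ^ (n - 1 - i) := by
  simp [lagrangeRes, gpoly]

lemma lagrangeRes_add [CharP E 2] {q m n : ℕ} (hq : q = 2 ^ m) (x : E) (β γ : FQ) :
    lagrangeRes q n x (β + γ) = lagrangeRes q n x β + lagrangeRes q n x γ := by
  subst hq
  simp only [lagrangeRes_eq_sum, map_add, ← Finset.sum_add_distrib, ← pow_mul,
    add_pow_char_pow, add_mul]

lemma lagrangeRes_zero {q n : ℕ} (hq0 : q ≠ 0) (x : E) :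
    lagrangeRes q n x (0 : FQ) = 0 := by
  simp [lagrangeRes_eq_sum, hq0]

lemma lagrangeRes_smul {q n : ℕ} (hfrob : ∀ a : Fq, a ^ q = a) (x : E) (a : Fq) (β : FQ) :
    lagrangeRes q n x (algebraMap Fq FQ a * β) = algebraMap Fq E a * lagrangeRes q n x β := by
  have h : ∀ i, a ^ q ^ i = a := by
    intro i
    induction i with
    | zero => simp
    | succ i ih => rw [pow_succ, pow_mul, ih, hfrob]
  simp only [lagrangeRes_eq_sum, map_mul, mul_pow, Finset.mul_sum, mul_assoc,
    ← IsScalarTower.algebraMap_apply, ← map_pow, h]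

/-- Applying Frobenius to `β` multiplies the resolvent at an `n`-th root of unity `x` by `x`. -/
lemma lagrangeRes_frob {q n : ℕ} {x : E} (hx : x ^ n = 1) {β : FQ} (hβ : β ^ q ^ n = β) :
    lagrangeRes q n x (β ^ q) = x * lagrangeRes q n x β := by
  set b : E := algebraMap FQ E β with hb
  have hbn : b ^ q ^ n = b := by rw [hb, ← map_pow, hβ]
  have h1 : lagrangeRes q n x (β ^ q) =
      ∑ i ∈ Finset.range n, b ^ q ^ (i + 1) * x ^ (n - (i + 1)) := by
    rw [lagrangeRes_eq_sum]
    refine Finset.sum_congr rfl fun i hi => ?_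
    rw [map_pow, ← hb, ← pow_mul, ← pow_succ', Nat.sub_sub, add_comm 1 i]
  have h2 : x * lagrangeRes q n x β = ∑ i ∈ Finset.range n, b ^ q ^ i * x ^ (n - i) := by
    rw [lagrangeRes_eq_sum, Finset.mul_sum]
    refine Finset.sum_congr rfl fun i hi => ?_
    have : n - i = (n - 1 - i) + 1 := by have := Finset.mem_range.1 hi; omega
    rw [this, pow_succ]; ring
  have h3 := Finset.sum_range_succ (fun i => b ^ q ^ i * x ^ (n - i)) n
  have h4 := Finset.sum_range_succ' (fun i => b ^ q ^ i * x ^ (n - i)) n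
  simp only [Nat.sub_self, pow_zero, mul_one, Nat.sub_zero, hx, pow_one, hbn] at h3 h4
  rw [h1, h2]
  exact add_right_cancel (h4.symm.trans h3)

lemma lagrangeRes_frob_iter {q n : ℕ} {x : E} (hx : x ^ n = 1)
    (hFQ : ∀ β : FQ, β ^ q ^ n = β) (β : FQ) (i : ℕ) :
    lagrangeRes q n x (β ^ q ^ i) = x ^ i * lagrangeRes q n x β := by
  induction i with
  | zero => simp
  | succ i ih => rw [pow_succ q, pow_mul, lagrangeRes_frob hx (hFQ _), ih]; ring

/-- The resolvent turns `f(φ_q)` into multiplication by `f(x)`. -/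
lemma lagrangeRes_lineval [CharP E 2] {q m n : ℕ} (hq : q = 2 ^ m)
    (hfrob : ∀ a : Fq, a ^ q = a) {x : E} (hx : x ^ n = 1)
    (hFQ : ∀ β : FQ, β ^ q ^ n = β) (f : Fq[X]) (β : FQ) :
    lagrangeRes q n x (lineval q f β) = aeval x f * lagrangeRes q n x β := by
  have hq0 : q ≠ 0 := by rw [hq]; positivity
  have hsum : ∀ (s : Finset ℕ) (g : ℕ → FQ),
      lagrangeRes q n x (∑ i ∈ s, g i) = ∑ i ∈ s, lagrangeRes q n x (g i) := by
    intro s g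
    induction s using Finset.cons_induction with
    | empty => simp [lagrangeRes_zero hq0]
    | cons a s ha ih => rw [Finset.sum_cons, Finset.sum_cons, lagrangeRes_add hq, ih]
  rw [lineval, Polynomial.sum, hsum, aeval_def, eval₂_eq_sum, Polynomial.sum, Finset.sum_mul]
  refine Finset.sum_congr rfl fun i _ => ?_
  rw [lagrangeRes_smul hfrob, lagrangeRes_frob_iter hx hFQ, mul_assoc]

/-- Frobenius carries the resolvent at `x` to that at `x^q`, up to a unit. -/
lemma lagrangeRes_pow [CharP E 2] {q m n : ℕ} (hq : q = 2 ^ m) {x : E} (hx : x ^ n = 1)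
    (hFQ : ∀ β : FQ, β ^ q ^ n = β) (β : FQ) :
    lagrangeRes q n x β ^ q = x ^ q * lagrangeRes q n (x ^ q) β := by
  have hxq : (x ^ q) ^ n = 1 := by rw [← pow_mul, mul_comm, pow_mul, hx, one_pow]
  rw [← lagrangeRes_frob hxq (hFQ β), lagrangeRes_eq_sum, lagrangeRes_eq_sum]
  conv_lhs => rw [hq, sum_pow_char_pow, ← hq]
  refine Finset.sum_congr rfl fun i _ => ?_
  rw [mul_pow, map_pow, ← pow_mul, ← pow_mul, ← pow_mul, ← pow_mul, mul_comm q (q ^ i),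
    mul_comm q (n - 1 - i)]

lemma lagrangeRes_pow_eq_zero_iff [CharP E 2] {q m n : ℕ} (hn : n ≠ 0) (hq : q = 2 ^ m) {x : E}
    (hx : x ^ n = 1) (hFQ : ∀ β : FQ, β ^ q ^ n = β) (β : FQ) (t : ℕ) :
    lagrangeRes q n (x ^ q ^ t) β = 0 ↔ lagrangeRes q n x β = 0 := by
  have hq0 : q ≠ 0 := by rw [hq]; positivity
  induction t with
  | zero => simp
  | succ t ih =>
    have hxt : (x ^ q ^ t) ^ n = 1 := by rw [← pow_mul, mul_comm, pow_mul, hx, one_pow]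
    have hx0 : x ^ q ^ t ≠ 0 := fun h => by simp [h, hn] at hxt
    refine Iff.trans ?_ ih
    rw [pow_succ q, pow_mul, ← pow_eq_zero_iff (a := lagrangeRes q n (x ^ q ^ t) β) hq0,
      lagrangeRes_pow hq hxt hFQ, mul_eq_zero, or_iff_right (pow_ne_zero _ hx0)]

lemma pow_zmod_val_natCast {n : ℕ} {ζ : E} (hζ : ζ ^ n = 1) (k : ℕ) :
    ζ ^ (k : ZMod n).val = ζ ^ k := by
  rw [ZMod.val_natCast, ← pow_eq_pow_mod k hζ]

lemma pow_zmod_val_mul {n : ℕ} {ζ : E} (hζ : ζ ^ n = 1) (a b : ZMod n) :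
    ζ ^ (a * b).val = (ζ ^ a.val) ^ b.val := by
  rw [ZMod.val_mul, ← pow_eq_pow_mod _ hζ, pow_mul]

lemma pow_zmod_val_mul_pow {n : ℕ} {ζ : E} (hζ : ζ ^ n = 1) (a : ZMod n) (q t : ℕ) :
    ζ ^ (a * (q : ZMod n) ^ t).val = (ζ ^ a.val) ^ q ^ t := by
  have h : (ζ ^ a.val) ^ n = 1 := by rw [← pow_mul, mul_comm, pow_mul, hζ, one_pow]
  rw [pow_zmod_val_mul hζ, ← Nat.cast_pow, pow_zmod_val_natCast h]

lemma pow_zmod_val_injective {n : ℕ} [NeZero n] {ζ : E} (hζ : IsPrimitiveRoot ζ n) :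
    Function.Injective fun s : ZMod n => ζ ^ s.val := fun a b h =>
  ZMod.val_injective n (hζ.pow_inj (ZMod.val_lt a) (ZMod.val_lt b) h)

/-- The resolvents at all `n`-th roots of unity determine `β`, since `g_β` has degree `< n`. -/
lemma eq_zero_of_lagrangeRes {q n : ℕ} [NeZero n] {ζ : E} (hζ : IsPrimitiveRoot ζ n) {β : FQ}
    (h : ∀ s : ZMod n, lagrangeRes q n (ζ ^ s.val) β = 0) : β = 0 := by
  have hn : 0 < n := NeZero.pos n
  have hdeg : (gpoly q n β).natDegree < n := by
    refine lt_of_le_of_lt (natDegree_sum_le_of_forall_le (n := n - 1) _ _ fun i _ => ?_) (by omega)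
    exact (natDegree_C_mul_X_pow_le _ _).trans (Nat.sub_le _ _)
  have h0 : (gpoly q n β).map (algebraMap FQ E) = 0 := by
    refine eq_zero_of_natDegree_lt_card_of_eval_eq_zero _ (pow_zmod_val_injective hζ)
      (fun s => ?_) ?_
    · rw [eval_map_algebraMap]; exact h s
    · rw [ZMod.card]; exact natDegree_map_le.trans_lt hdeg
  have h1 := (Polynomial.map_eq_zero _).1 h0
  have h2 : (gpoly q n β).coeff (n - 1) = β := by
    rw [gpoly, finsetSum_coeff, Finset.sum_eq_single 0]
    · simp
    · intro i hi hi0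
      rw [coeff_C_mul, coeff_X_pow, if_neg, mul_zero]
      have := Finset.mem_range.1 hi; omega
    · intro h; simp at h; omega
  rw [← h2, h1, coeff_zero]

/-- `f` annihilates `β` iff `f` vanishes at every root of unity where the resolvent does not. -/
lemma lineval_eq_zero_iff_s16 [CharP E 2] {q m n : ℕ} [NeZero n] (hq : q = 2 ^ m)
    (hfrob : ∀ a : Fq, a ^ q = a) (hFQ : ∀ β : FQ, β ^ q ^ n = β)
    {ζ : E} (hζ : IsPrimitiveRoot ζ n) (f : Fq[X]) (β : FQ) :
    lineval q f β = 0 ↔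
      ∀ s : ZMod n, aeval (ζ ^ s.val) f = 0 ∨ lagrangeRes q n (ζ ^ s.val) β = 0 := by
  have hx : ∀ s : ZMod n, (ζ ^ s.val) ^ n = 1 := fun s => by
    rw [← pow_mul, mul_comm, pow_mul, hζ.pow_eq_one, one_pow]
  have hq0 : q ≠ 0 := by rw [hq]; positivity
  simp only [← mul_eq_zero, ← lagrangeRes_lineval hq hfrob (hx _) hFQ]
  exact ⟨fun h s => by rw [h, lagrangeRes_zero hq0], eq_zero_of_lagrangeRes hζ⟩

/-- Divisors of `X^n - 1` have as many zeros among the powers of `ζ` as their degree. -/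
lemma natDegree_of_dvd_X_pow_sub_one {n : ℕ} [NeZero n] {ζ : E} (hζ : IsPrimitiveRoot ζ n)
    {G : FQ[X]} (hG : G ∣ X ^ n - 1) {S : Finset (ZMod n)}
    (hS : ∀ s, s ∈ S ↔ aeval (ζ ^ s.val) G = 0) : G.natDegree = S.card := by
  classical
  have hn : 0 < n := NeZero.pos n
  have hne : (X ^ n - 1 : E[X]) ≠ 0 := (monic_X_pow_sub_C (1 : E) hn.ne').ne_zero
  have hd : G.map (algebraMap FQ E) ∣ X ^ n - 1 := by
    simpa using Polynomial.map_dvd (algebraMap FQ E) hG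
  have hG0 : G.map (algebraMap FQ E) ≠ 0 := ne_zero_of_dvd_ne_zero hne hd
  have hsplit : (G.map (algebraMap FQ E)).Splits := by
    have := X_pow_sub_one_splits hζ
    rw [C_1] at this
    exact this.of_dvd hne hd
  have hnodup : (G.map (algebraMap FQ E)).roots.Nodup := by
    have h1 := IsPrimitiveRoot.nthRoots_one_nodup hζ
    rw [nthRoots, C_1] at h1
    exact Multiset.nodup_of_le (roots.le_of_dvd hne hd) h1
  rw [← natDegree_map (algebraMap FQ E), hsplit.natDegree_eq_card_roots,
    ← Multiset.toFinset_card_of_nodup hnodup,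
    ← Finset.card_image_of_injective S (pow_zmod_val_injective hζ)]
  congr 1
  ext x
  rw [Multiset.mem_toFinset, mem_roots hG0, IsRoot.def, eval_map_algebraMap, Finset.mem_image]
  constructor
  · intro hx
    have h1 : x ^ n = 1 := by
      have : (X ^ n - 1 : E[X]).eval x = 0 :=
        eval_eq_zero_of_dvd_of_eval_eq_zero hd (by rw [eval_map_algebraMap]; exact hx)
      simpa [sub_eq_zero] using this
    obtain ⟨i, hi, rfl⟩ := hζ.eq_pow_of_pow_eq_one h1
    refine ⟨(i : ZMod n), ?_, ?_⟩
    · rw [hS, pow_zmod_val_natCast hζ.pow_eq_one]; exact hx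
    · exact pow_zmod_val_natCast hζ.pow_eq_one i
  · rintro ⟨s, hs, rfl⟩
    exact (hS s).1 hs

/-- `β` is `k`-normal where `k` counts the roots of unity at which its resolvent vanishes. -/
lemma isKNormal_card {q n : ℕ} [NeZero n] {ζ : E} (hζ : IsPrimitiveRoot ζ n) {β : FQ}
    {S : Finset (ZMod n)} (hS : ∀ s, s ∈ S ↔ lagrangeRes q n (ζ ^ s.val) β = 0) :
    IsKNormal q n S.card β := by
  let _ := Classical.decEq FQ[X]
  refine natDegree_of_dvd_X_pow_sub_one hζ (EuclideanDomain.gcd_dvd_right _ _) fun s => ?_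
  have hx : (ζ ^ s.val) ^ n = 1 := by
    rw [← pow_mul, mul_comm, pow_mul, hζ.pow_eq_one, one_pow]
  rw [hS]
  constructor
  · intro h
    rw [EuclideanDomain.gcd_eq_gcd_ab, map_add, map_mul, map_mul]
    rw [lagrangeRes] at h
    simp [h, hx]
  · intro h
    exact aeval_eq_zero_of_dvd_aeval_eq_zero (EuclideanDomain.gcd_dvd_left _ _) h

/-- An element of an extension of `F_q` fixed by the `q`-power Frobenius lies in `F_q`. -/
lemma mem_range_of_pow_eq [Fintype Fq] {q : ℕ} (hcard : Fintype.card Fq = q) {b : E} (hb : b ^ q = b) :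
    b ∈ Set.range (algebraMap Fq E) := by
  classical
  have hq : 1 < q := hcard ▸ Fintype.one_lt_card
  have hne : (X ^ q - X : E[X]) ≠ 0 := FiniteField.X_pow_card_sub_X_ne_zero E hq
  by_contra hnot
  let T : Finset E := insert b (Finset.univ.image (algebraMap Fq E))
  have hT : T.card = q + 1 := by
    rw [Finset.card_insert_of_notMem (by simpa using hnot),
      Finset.card_image_of_injective _ (algebraMap Fq E).injective, Finset.card_univ, hcard]
  refine hne (eq_zero_of_natDegree_lt_card_of_eval_eq_zero' _ T (fun x hx => ?_) ?_)
  · rw [Finset.mem_insert, Finset.mem_image] at hx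
    rcases hx with rfl | ⟨a, -, rfl⟩
    · simp [hb]
    · have : a ^ q = a := by rw [← hcard]; exact FiniteField.pow_card a
      simp [← map_pow, this]
  · rw [hT, FiniteField.X_pow_card_sub_X_natDegree_eq E hq]; omega

end Resolvent

/-! ### The cosets `D` and `D'` -/

section Cosets

variable {n q : ℕ} [Fact n.Prime] {D D' : Finset (ZMod n)}

lemma cast_ne_zero_of_order (hn3 : 3 ≤ n) (horder : orderOf (q : ZMod n) = (n - 1) / 2) :
    (q : ZMod n) ≠ 0 := by
  intro h0
  have h : orderOf (q : ZMod n) ≠ 0 := by omega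
  rw [h0] at h
  have := pow_orderOf_eq_one (0 : ZMod n)
  rw [zero_pow h] at this
  exact zero_ne_one this

lemma card_D (horder : orderOf (q : ZMod n) = (n - 1) / 2) (hn3 : 3 ≤ n)
    (hD : ∀ x : ZMod n, x ∈ D ↔ ∃ t : ℕ, x = (q : ZMod n) ^ t) : D.card = (n - 1) / 2 := by
  have hpos : 0 < orderOf (q : ZMod n) := by omega
  have : D = (Finset.range (orderOf (q : ZMod n))).image fun t => (q : ZMod n) ^ t := by
    ext x
    rw [hD, Finset.mem_image]
    constructor
    · rintro ⟨t, rfl⟩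
      exact ⟨t % orderOf (q : ZMod n), Finset.mem_range.2 (Nat.mod_lt _ hpos),
        pow_mod_orderOf _ _⟩
    · rintro ⟨t, -, rfl⟩
      exact ⟨t, rfl⟩
  rw [this, Finset.card_image_of_injOn, Finset.card_range, horder]
  intro a ha b hb h
  exact pow_injOn_Iio_orderOf (by simpa using ha) (by simpa using hb) h

lemma zero_notMem_D (hq0 : (q : ZMod n) ≠ 0)
    (hD : ∀ x : ZMod n, x ∈ D ↔ ∃ t : ℕ, x = (q : ZMod n) ^ t) : (0 : ZMod n) ∉ D := by
  rw [hD]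
  rintro ⟨t, ht⟩
  exact pow_ne_zero t hq0 ht.symm

lemma disjoint_D (hD' : ∀ x : ZMod n, x ∈ D' ↔ (x ≠ 0 ∧ x ∉ D)) : Disjoint D D' :=
  Finset.disjoint_right.2 fun x hx => ((hD' x).1 hx).2

lemma union_D (hq0 : (q : ZMod n) ≠ 0)
    (hD : ∀ x : ZMod n, x ∈ D ↔ ∃ t : ℕ, x = (q : ZMod n) ^ t)
    (hD' : ∀ x : ZMod n, x ∈ D' ↔ (x ≠ 0 ∧ x ∉ D)) : D ∪ D' = Finset.univ.erase 0 := by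
  ext x
  have h0 := zero_notMem_D hq0 hD
  rw [Finset.mem_union, hD', Finset.mem_erase]
  by_cases hx : x ∈ D
  · have : x ≠ 0 := fun h => h0 (h ▸ hx)
    simp [hx, this]
  · simp [hx]

lemma card_D' (horder : orderOf (q : ZMod n) = (n - 1) / 2) (hn3 : 3 ≤ n) (hnodd : Odd n)
    (hD : ∀ x : ZMod n, x ∈ D ↔ ∃ t : ℕ, x = (q : ZMod n) ^ t)
    (hD' : ∀ x : ZMod n, x ∈ D' ↔ (x ≠ 0 ∧ x ∉ D)) : D'.card = (n - 1) / 2 := by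
  have h1 := congrArg Finset.card (union_D (cast_ne_zero_of_order hn3 horder) hD hD')
  rw [Finset.card_union_of_disjoint (disjoint_D hD'), card_D horder hn3 hD,
    Finset.card_erase_of_mem (Finset.mem_univ _), Finset.card_univ, ZMod.card] at h1
  obtain ⟨k, rfl⟩ := hnodd
  omega

/-- `D'` is a single coset of `D`: the inclusion `wD ⊆ D'` is an equality by cardinality. -/
lemma image_mul_D (horder : orderOf (q : ZMod n) = (n - 1) / 2) (hn3 : 3 ≤ n) (hnodd : Odd n)
    (hD : ∀ x : ZMod n, x ∈ D ↔ ∃ t : ℕ, x = (q : ZMod n) ^ t)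
    (hD' : ∀ x : ZMod n, x ∈ D' ↔ (x ≠ 0 ∧ x ∉ D)) {w : ZMod n} (hw : w ∈ D') :
    D.image (w * ·) = D' := by
  have hq0 := cast_ne_zero_of_order hn3 horder
  have hw' := (hD' w).1 hw
  refine Finset.eq_of_subset_of_card_le ?_ ?_
  · intro x hx
    obtain ⟨r, hr, rfl⟩ := Finset.mem_image.1 hx
    obtain ⟨t, rfl⟩ := (hD r).1 hr
    refine (hD' _).2 ⟨mul_ne_zero hw'.1 (pow_ne_zero _ hq0), fun h => hw'.2 ?_⟩
    obtain ⟨u, hu⟩ := (hD _).1 h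
    have hord : 0 < orderOf (q : ZMod n) := by omega
    -- `q ^ (t * (ord - 1))` is the inverse of `q ^ t`
    refine (hD w).2 ⟨u + t * (orderOf (q : ZMod n) - 1), ?_⟩
    have h1 : (q : ZMod n) ^ t * (q : ZMod n) ^ (t * (orderOf (q : ZMod n) - 1)) = 1 := by
      rw [← pow_add, add_comm, ← Nat.mul_succ, Nat.succ_eq_add_one, Nat.sub_add_cancel hord,
        mul_comm, pow_mul, pow_orderOf_eq_one, one_pow]
    rw [pow_add, ← hu]
    simp only [mul_assoc, h1, mul_one]
  · rw [card_D' horder hn3 hnodd hD hD', Finset.card_image_of_injective _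
      (mul_right_injective₀ hw'.1), card_D horder hn3 hD]

variable {E : Type*} [Field E]

/-- Reindexing a sum of powers of `ζ^w` over a set `C` as one over the translate `wC`. -/
lemma sum_pow_image {ζ : E} (hζ : ζ ^ n = 1) {w : ZMod n} (hw : w ≠ 0)
    (C : Finset (ZMod n)) :
    ∑ r ∈ C, (ζ ^ w.val) ^ r.val = ∑ r ∈ C.image (w * ·), ζ ^ r.val := by
  rw [Finset.sum_image fun a _ b _ h => mul_right_injective₀ hw h]
  exact Finset.sum_congr rfl fun r _ => (pow_zmod_val_mul hζ w r).symm

lemma image_mul_D_of_mem (horder : orderOf (q : ZMod n) = (n - 1) / 2) (hn3 : 3 ≤ n)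
    (hD : ∀ x : ZMod n, x ∈ D ↔ ∃ t : ℕ, x = (q : ZMod n) ^ t) {w : ZMod n} (hw : w ∈ D) :
    D.image (w * ·) = D := by
  have hw0 : w ≠ 0 := fun h => zero_notMem_D (cast_ne_zero_of_order hn3 horder) hD (h ▸ hw)
  refine Finset.eq_of_subset_of_card_le ?_
    (Finset.card_image_of_injective _ (mul_right_injective₀ hw0)).ge
  intro x hx
  obtain ⟨r, hr, rfl⟩ := Finset.mem_image.1 hx
  obtain ⟨t, rfl⟩ := (hD r).1 hr
  obtain ⟨u, rfl⟩ := (hD w).1 hw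
  exact (hD _).2 ⟨u + t, (pow_add _ _ _).symm⟩

end Cosets

/-! ### Conventional minimal polynomials from the support of the resolvent -/

section Cases

variable {Fq FQ E : Type*} [Field Fq] [Fintype Fq] [Field FQ] [Field E]
  [Algebra Fq FQ] [Algebra FQ E] [Algebra Fq E] [IsScalarTower Fq FQ E] [CharP E 2]

/-- If the resolvent of `α` is supported exactly on one coset `C` of `⟨q⟩`, then `m_α` is the
minimal polynomial over `F_q` of `ζ^w`, for `w ∈ C`, and `α` is `(n - |C|)`-normal. -/
lemma isMinPoly_of_support {m n q : ℕ} [Fact n.Prime] (hq : q = 2 ^ m) (hn3 : 3 ≤ n)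
    (hnodd : Odd n) (hcard : Fintype.card Fq = q)
    (horder : orderOf (q : ZMod n) = (n - 1) / 2)
    (hFQ : ∀ β : FQ, β ^ q ^ n = β)
    {ζ : E} (hζ : IsPrimitiveRoot ζ n) {α : FQ} {C : Finset (ZMod n)}
    (hC : C.card = (n - 1) / 2) {w : ZMod n} (hw : w ≠ 0) (hwC : w ∈ C)
    (hCw : ∀ s ∈ C, ∃ t : ℕ, s = w * (q : ZMod n) ^ t)
    (hsupp : ∀ s, lagrangeRes q n (ζ ^ s.val) α ≠ 0 ↔ s ∈ C) :
    IsKNormal q n ((n + 1) / 2) α ∧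
      ∃ m₂ : Polynomial Fq, m₂.Monic ∧ Irreducible m₂ ∧ m₂.natDegree = (n - 1) / 2 ∧
        m₂ ∣ (Polynomial.X ^ n - 1) ∧ IsMinPoly q α m₂ := by
  have hfrob : ∀ a : Fq, a ^ q = a := fun a => hcard ▸ FiniteField.pow_card a
  have hnp : n.Prime := Fact.out
  have hprim : IsPrimitiveRoot (ζ ^ w.val) n := by
    refine hζ.pow_of_coprime _ ((Nat.coprime_comm.1 ((Nat.Prime.coprime_iff_not_dvd hnp).2 ?_)))
    intro h
    exact hw ((ZMod.val_eq_zero w).1 (Nat.eq_zero_of_dvd_of_lt h (ZMod.val_lt w)))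
  have hint : IsIntegral Fq (ζ ^ w.val) :=
    ⟨X ^ n - Polynomial.C 1, monic_X_pow_sub_C _ hnp.ne_zero, by simp [hprim.pow_eq_one]⟩
  have hdvdc : minpoly Fq (ζ ^ w.val) ∣ cyclotomic n Fq := by
    refine minpoly.dvd _ _ ?_
    rw [← eval_map_algebraMap, map_cyclotomic]
    exact hprim.isRoot_cyclotomic hnp.pos
  have hcop : Nat.Coprime 2 n := Nat.coprime_two_left.2 hnodd
  constructor
  · have h := isKNormal_card (S := Cᶜ) (q := q) (β := α) hζ fun s => by
      rw [Finset.mem_compl, ← hsupp, not_not]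
    rw [Finset.card_compl, hC, ZMod.card] at h
    have e : n - (n - 1) / 2 = (n + 1) / 2 := by
      obtain ⟨k, rfl⟩ := hnodd; omega
    rwa [e] at h
  · refine ⟨minpoly Fq (ζ ^ w.val), minpoly.monic hint, minpoly.irreducible hint, ?_,
      hdvdc.trans (cyclotomic.dvd_X_pow_sub_one n Fq), minpoly.monic hint, ?_, ?_⟩
    · have : Fact (Nat.Prime 2) := ⟨Nat.prime_two⟩
      rw [natDegree_of_dvd_cyclotomic_of_irreducible (hcard.trans hq) hcop hdvdc
        (minpoly.irreducible hint), ← horder, ← orderOf_units, ZMod.coe_unitOfCoprime, hq]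
    · rw [lineval_eq_zero_iff_s16 hq hfrob hFQ hζ]
      intro s
      refine or_iff_not_imp_right.2 fun h => ?_
      obtain ⟨t, rfl⟩ := hCw s ((hsupp s).1 h)
      rw [pow_zmod_val_mul_pow hζ.pow_eq_one]
      -- the `q`-power Frobenius permutes the roots of a polynomial over `F_q`
      have key : ∀ (x : E) (f : Fq[X]), aeval x f = 0 → ∀ t : ℕ, aeval (x ^ q ^ t) f = 0 := by
        intro x f hx t
        induction t with
        | zero => simpa using hx
        | succ t ih =>
          have := FiniteField.expand_card f
          rw [hcard] at this
          rw [pow_succ q, pow_mul, ← expand_aeval, this, map_pow, ih,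
            zero_pow (by rw [hq]; positivity)]
      exact key _ _ (minpoly.aeval _ _) t
    · intro g hg
      refine minpoly.dvd _ _ ?_
      exact ((lineval_eq_zero_iff_s16 hq hfrob hFQ hζ _ _).1 hg w).resolve_right
        ((hsupp w).2 hwC)

/-- If the resolvent of `α` vanishes only at `1`, then `m_α = X^(n-1) + ⋯ + X + 1`. -/
lemma isMinPoly_of_full_support {m n q : ℕ} [Fact n.Prime] (hq : q = 2 ^ m)
    (hcard : Fintype.card Fq = q) (hFQ : ∀ β : FQ, β ^ q ^ n = β)
    {ζ : E} (hζ : IsPrimitiveRoot ζ n) {α : FQ}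
    (hsupp : ∀ s : ZMod n, lagrangeRes q n (ζ ^ s.val) α = 0 ↔ s = 0) :
    IsKNormal q n 1 α ∧
      IsMinPoly q α (∑ i ∈ Finset.range n, Polynomial.X ^ i : Polynomial Fq) := by
  have hfrob : ∀ a : Fq, a ^ q = a := fun a => hcard ▸ FiniteField.pow_card a
  have hnp : n.Prime := Fact.out
  have hprim : ∀ s : ZMod n, s ≠ 0 → IsPrimitiveRoot (ζ ^ s.val) n := by
    intro s hs
    refine hζ.pow_of_coprime _ ((Nat.coprime_comm.1 ((Nat.Prime.coprime_iff_not_dvd hnp).2 ?_)))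
    intro h
    exact hs ((ZMod.val_eq_zero s).1 (Nat.eq_zero_of_dvd_of_lt h (ZMod.val_lt s)))
  rw [← cyclotomic_prime]
  refine ⟨?_, cyclotomic.monic n Fq, ?_, ?_⟩
  · simpa using isKNormal_card (S := {0}) (q := q) (β := α) hζ fun s => by
      rw [Finset.mem_singleton, hsupp]
  · rw [lineval_eq_zero_iff_s16 hq hfrob hFQ hζ]
    intro s
    refine or_iff_not_imp_right.2 fun h => ?_
    rw [hsupp] at h
    rw [← eval_map_algebraMap, map_cyclotomic]
    exact (hprim s h).isRoot_cyclotomic hnp.pos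
  · intro g hg
    rw [lineval_eq_zero_iff_s16 hq hfrob hFQ hζ] at hg
    rw [← map_dvd_map' (algebraMap Fq E), map_cyclotomic,
      cyclotomic_eq_prod_X_sub_primitiveRoots hζ]
    refine Finset.prod_dvd_of_coprime (fun a _ b _ hab => ?_) fun x hx => ?_
    · exact pairwise_coprime_X_sub_C Function.injective_id hab
    · rw [dvd_iff_isRoot, IsRoot.def, eval_map_algebraMap]
      have hx' := (mem_primitiveRoots hnp.pos).1 hx
      obtain ⟨i, hi, rfl⟩ := hζ.eq_pow_of_pow_eq_one hx'.pow_eq_one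
      rw [← pow_zmod_val_natCast hζ.pow_eq_one]
      refine (hg _).resolve_right fun h => ?_
      rw [hsupp] at h
      rw [← pow_zmod_val_natCast hζ.pow_eq_one, h, ZMod.val_zero, pow_zero] at hx'
      exact hnp.one_lt.ne' (hx'.unique IsPrimitiveRoot.one)

end Cases

/-! ### The support determined by `ε` -/

theorem stmt_16 (m n q : ℕ) (hnp : n.Prime) (hn3 : 3 ≤ n) (hnodd : Odd n)
    (hm : 0 < m) (hq : q = 2 ^ m)
    {Fq FQ E : Type*} [Field Fq] [Fintype Fq] [Field FQ] [Fintype FQ] [Field E]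
    [Algebra Fq FQ] [Algebra FQ E] [Algebra Fq E] [IsScalarTower Fq FQ E]
    (hcard : Fintype.card Fq = q) (hcardQ : Fintype.card FQ = q ^ n)
    (horder : orderOf (q : ZMod n) = (n - 1) / 2)
    -- D = ⟨q⟩ is the subgroup of squares of (ZMod n)ˣ, D' its nontrivial coset
    (D D' : Finset (ZMod n))
    (hD : ∀ x : ZMod n, x ∈ D ↔ ∃ t : ℕ, x = (q : ZMod n) ^ t)
    (hD' : ∀ x : ZMod n, x ∈ D' ↔ (x ≠ 0 ∧ x ∉ D))
    -- ζ a primitive n-th root of unity in the extension E of F_Q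
    (ζ : E) (hζ : IsPrimitiveRoot ζ n)
    (α : FQ) (hα : α ≠ 0)
    (hα2 : α ∉ Set.range (algebraMap Fq FQ))
    (htr : ∑ i ∈ Finset.range n, α ^ q ^ i = 0) :
    let B : E := ∑ r ∈ D', ζ ^ r.val
    let ε : FQ := ∑ r ∈ D, α ^ q ^ r.val
    B ∈ Set.range (algebraMap Fq E) ∧
    ((algebraMap FQ E ε ≠ B * algebraMap FQ E α ∧
        algebraMap FQ E ε ≠ (B + 1) * algebraMap FQ E α) →
      IsKNormal q n 1 α ∧
        IsMinPoly q α (∑ i ∈ Finset.range n, Polynomial.X ^ i : Polynomial Fq)) ∧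
    ((algebraMap FQ E ε = B * algebraMap FQ E α ∨
        algebraMap FQ E ε = (B + 1) * algebraMap FQ E α) →
      IsKNormal q n ((n + 1) / 2) α ∧
        ∃ m₂ : Polynomial Fq, m₂.Monic ∧ Irreducible m₂ ∧ m₂.natDegree = (n - 1) / 2 ∧
          m₂ ∣ (Polynomial.X ^ n - 1) ∧ IsMinPoly q α m₂) := by
  intro B ε
  have : Fact n.Prime := ⟨hnp⟩
  have hFQ : ∀ β : FQ, β ^ q ^ n = β := fun β => by
    rw [← hcardQ]; exact FiniteField.pow_card β
  have hfrob : ∀ a : Fq, a ^ q = a := fun a => hcard ▸ FiniteField.pow_card a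
  have hchar : CharP E 2 := by
    have h2 : (2 : Fq) = 0 := by
      have h : ((q : ℕ) : Fq) = 0 := by rw [← hcard]; exact Nat.cast_card_eq_zero Fq
      rw [hq, Nat.cast_pow] at h
      simpa using eq_zero_of_pow_eq_zero h
    refine CharTwo.of_one_ne_zero_of_two_eq_zero one_ne_zero ?_
    rw [← map_ofNat (algebraMap Fq E) 2, h2, map_zero]
  have hζ1 := hζ.pow_eq_one
  have hq0 := cast_ne_zero_of_order hn3 horder
  have hD0 := zero_notMem_D hq0 hD
  have hcD := card_D horder hn3 hD
  have hcD' := card_D' horder hn3 hnodd hD hD'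
  have hx : ∀ s : ZMod n, (ζ ^ s.val) ^ n = 1 := fun s => by
    rw [← pow_mul, mul_comm, pow_mul, hζ1, one_pow]
  have h1D : (1 : ZMod n) ∈ D := (hD 1).2 ⟨0, by simp⟩
  have hqD : (q : ZMod n) ∈ D := (hD _).2 ⟨1, by simp⟩
  obtain ⟨w, hw⟩ : D'.Nonempty := Finset.card_pos.1 (by omega)
  have hw0 := ((hD' w).1 hw).1
  have hwD' : ∀ v ∈ D', D.image (v * ·) = D' := fun v hv =>
    image_mul_D horder hn3 hnodd hD hD' hv
  have hcoset : ∀ s ∈ D', ∃ t : ℕ, s = w * (q : ZMod n) ^ t := by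
    intro s hs
    rw [← hwD' w hw, Finset.mem_image] at hs
    obtain ⟨r, hr, rfl⟩ := hs
    obtain ⟨t, rfl⟩ := (hD r).1 hr
    exact ⟨t, rfl⟩
  have hcoset1 : ∀ s ∈ D, ∃ t : ℕ, s = 1 * (q : ZMod n) ^ t := by
    intro s hs
    simpa using (hD s).1 hs
  -- the two Gaussian periods add up to `-1 = 1`
  have hAB : ∑ r ∈ D, ζ ^ r.val = B + 1 := by
    have h1 : ∑ r : ZMod n, ζ ^ r.val = 0 := by
      rw [← hζ.geom_sum_eq_zero hnp.one_lt]
      refine Finset.sum_nbij' (fun r => r.val) (fun i => (i : ZMod n)) ?_ ?_ ?_ ?_ ?_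
      · intro r _; exact Finset.mem_range.2 (ZMod.val_lt r)
      · intro i _; exact Finset.mem_univ _
      · intro r _; exact ZMod.natCast_zmod_val r
      · intro i hi; exact ZMod.val_cast_of_lt (Finset.mem_range.1 hi)
      · intro r _; rfl
    rw [← Finset.add_sum_erase _ _ (Finset.mem_univ (0 : ZMod n)), ← union_D hq0 hD hD',
      Finset.sum_union (disjoint_D hD'), ZMod.val_zero, pow_zero] at h1
    change 1 + (_ + B) = 0 at h1
    have h2 := CharTwo.add_self_eq_zero (B + 1)
    linear_combination h1 - h2
  have hBrange : B ∈ Set.range (algebraMap Fq E) := by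
    refine mem_range_of_pow_eq hcard ?_
    have h1 : B ^ q = ∑ r ∈ D', ζ ^ ((q : ZMod n) * r).val := by
      change (∑ r ∈ D', ζ ^ r.val) ^ q = _
      conv_lhs => rw [hq, sum_pow_char_pow, ← hq]
      refine Finset.sum_congr rfl fun r _ => ?_
      rw [pow_zmod_val_mul hζ1, pow_zmod_val_natCast hζ1, ← pow_mul, ← pow_mul, mul_comm]
    have h2 : D'.image ((q : ZMod n) * ·) = D' := by
      rw [← hwD' w hw, Finset.image_image]
      conv_rhs => rw [← image_mul_D_of_mem horder hn3 hD hqD, Finset.image_image]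
      refine Finset.image_congr fun r _ => ?_
      simp only [Function.comp]; ring
    rw [h1, ← Finset.sum_image (f := fun r : ZMod n => ζ ^ r.val)
      (fun a _ b _ h => mul_right_injective₀ hq0 h), h2]
  refine ⟨hBrange, ?_⟩
  obtain ⟨b, hb⟩ := hBrange
  -- `e` represents `ε`, and takes the values `B + 1` on `D` and `B` on `D'`
  let e : Fq[X] := ∑ r ∈ D, X ^ r.val
  have heD : ∀ s ∈ D, aeval (ζ ^ s.val) e = B + 1 := by
    intro s hs
    have hs0 : s ≠ 0 := fun h => hD0 (h ▸ hs)
    simp only [e, map_sum, map_pow, aeval_X]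
    rw [sum_pow_image hζ1 hs0, image_mul_D_of_mem horder hn3 hD hs, hAB]
  have heD' : ∀ s ∈ D', aeval (ζ ^ s.val) e = B := by
    intro s hs
    simp only [e, map_sum, map_pow, aeval_X]
    rw [sum_pow_image hζ1 ((hD' s).1 hs).1, hwD' s hs]
  have hres_eps : ∀ s : ZMod n, lagrangeRes q n (ζ ^ s.val) ε =
      aeval (ζ ^ s.val) e * lagrangeRes q n (ζ ^ s.val) α := by
    intro s
    have hadd : ∀ C : Finset (ZMod n),
        lagrangeRes q n (ζ ^ s.val) (∑ r ∈ C, α ^ q ^ r.val) =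
          ∑ r ∈ C, lagrangeRes q n (ζ ^ s.val) (α ^ q ^ r.val) := by
      intro C
      induction C using Finset.cons_induction with
      | empty => simp [lagrangeRes_zero (FQ := FQ) (show q ≠ 0 by rw [hq]; positivity)]
      | cons a C ha ih => rw [Finset.sum_cons, Finset.sum_cons, lagrangeRes_add hq, ih]
    simp only [ε, e, map_sum, map_pow, aeval_X, hadd, Finset.sum_mul,
      lagrangeRes_frob_iter (hx s) hFQ]
  -- comparing resolvents turns the condition on `ε` into one on the support of the resolvent
  have heps : ∀ c : Fq, algebraMap FQ E ε = algebraMap Fq E c * algebraMap FQ E α ↔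
      ∀ s : ZMod n, aeval (ζ ^ s.val) e = algebraMap Fq E c ∨
        lagrangeRes q n (ζ ^ s.val) α = 0 := by
    intro c
    rw [IsScalarTower.algebraMap_apply Fq FQ E, ← map_mul, (algebraMap FQ E).injective.eq_iff,
      ← IsScalarTower.algebraMap_apply Fq FQ E]
    constructor
    · intro h s
      have h1 := hres_eps s
      rw [h, lagrangeRes_smul hfrob] at h1
      exact (mul_eq_mul_right_iff.1 h1).imp_left Eq.symm
    · intro h
      have : CharP FQ 2 := (algebraMap FQ E).charP (algebraMap FQ E).injective 2
      rw [← CharTwo.add_eq_zero]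
      refine eq_zero_of_lagrangeRes (q := q) hζ fun s => ?_
      rw [lagrangeRes_add hq, hres_eps, lagrangeRes_smul hfrob, ← add_mul]
      rcases h s with h | h
      · rw [h, CharTwo.add_self_eq_zero, zero_mul]
      · rw [h, mul_zero]
  have hres0 : lagrangeRes q n (ζ ^ (0 : ZMod n).val) α = 0 := by
    rw [lagrangeRes_eq_sum]
    simp only [ZMod.val_zero, pow_zero, one_pow, mul_one, ← map_pow, ← map_sum, htr, map_zero]
  -- the vanishing of the resolvent is constant along each coset of `⟨q⟩`
  have hresD : ∀ s ∈ D, (lagrangeRes q n (ζ ^ s.val) α = 0 ↔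
      lagrangeRes q n (ζ ^ (1 : ZMod n).val) α = 0) := by
    intro s hs
    obtain ⟨t, rfl⟩ := hcoset1 s hs
    rw [pow_zmod_val_mul_pow hζ1]
    exact lagrangeRes_pow_eq_zero_iff hnp.ne_zero hq (hx _) hFQ α t
  have hresD' : ∀ s ∈ D', (lagrangeRes q n (ζ ^ s.val) α = 0 ↔
      lagrangeRes q n (ζ ^ w.val) α = 0) := by
    intro s hs
    obtain ⟨t, rfl⟩ := hcoset s hs
    rw [pow_zmod_val_mul_pow hζ1]
    exact lagrangeRes_pow_eq_zero_iff hnp.ne_zero hq (hx _) hFQ α t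
  have htri : ∀ s : ZMod n, s = 0 ∨ s ∈ D ∨ s ∈ D' := by
    intro s
    rw [hD']
    tauto
  have hnz : ¬ (lagrangeRes q n (ζ ^ (1 : ZMod n).val) α = 0 ∧
      lagrangeRes q n (ζ ^ w.val) α = 0) := by
    rintro ⟨h1, h2⟩
    refine hα (eq_zero_of_lagrangeRes (q := q) hζ fun s => ?_)
    rcases htri s with rfl | hs | hs
    · exact hres0
    · exact (hresD s hs).2 h1
    · exact (hresD' s hs).2 h2
  -- `ε = Bα` iff the support is `D'`, and `ε = (B + 1)α` iff it is `D`
  have hepsB : algebraMap FQ E ε = B * algebraMap FQ E α ↔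
      lagrangeRes q n (ζ ^ (1 : ZMod n).val) α = 0 := by
    rw [← hb, heps, hb]
    constructor
    · intro h
      refine (h 1).resolve_left ?_
      rw [heD 1 h1D]
      simp
    · intro h s
      rcases htri s with rfl | hs | hs
      · exact Or.inr hres0
      · exact Or.inr ((hresD s hs).2 h)
      · exact Or.inl (heD' s hs)
  have hepsB1 : algebraMap FQ E ε = (B + 1) * algebraMap FQ E α ↔
      lagrangeRes q n (ζ ^ w.val) α = 0 := by
    have hb1 : algebraMap Fq E (b + 1) = B + 1 := by rw [map_add, hb, map_one]
    rw [← hb1, heps, hb1]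
    constructor
    · intro h
      refine (h w).resolve_left ?_
      rw [heD' w hw]
      simp
    · intro h s
      rcases htri s with rfl | hs | hs
      · exact Or.inr hres0
      · exact Or.inl (heD s hs)
      · exact Or.inr ((hresD' s hs).2 h)
  rw [Ne, Ne, hepsB, hepsB1]
  constructor
  · rintro ⟨h1, h2⟩
    refine isMinPoly_of_full_support hq hcard hFQ hζ fun s => ⟨fun h => ?_, ?_⟩
    · rcases htri s with hs | hs | hs
      · exact hs
      · exact absurd ((hresD s hs).1 h) h1
      · exact absurd ((hresD' s hs).1 h) h2
    · rintro rfl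
      exact hres0
  · rintro (h | h)
    · have h' : lagrangeRes q n (ζ ^ w.val) α ≠ 0 := fun h2 => hnz ⟨h, h2⟩
      refine isMinPoly_of_support hq hn3 hnodd hcard horder hFQ hζ hcD' hw0 hw hcoset
        fun s => ⟨fun hs => ?_, fun hs => (hresD' s hs).not.2 h'⟩
      rcases htri s with rfl | h1 | h1
      · exact absurd hres0 hs
      · exact absurd ((hresD s h1).2 h) hs
      · exact h1
    · have h' : lagrangeRes q n (ζ ^ (1 : ZMod n).val) α ≠ 0 := fun h2 => hnz ⟨h2, h⟩
      refine isMinPoly_of_support hq hn3 hnodd hcard horder hFQ hζ hcD one_ne_zero h1D hcoset1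
        fun s => ⟨fun hs => ?_, fun hs => (hresD s hs).not.2 h'⟩
      rcases htri s with rfl | h1 | h1
      · exact absurd hres0 hs
      · exact h1
      · exact absurd ((hresD' s h1).2 h) hs
end

section
/- Let n be an odd prime ≥ 3, q = 2^m, Q = q^n, and suppose that the multiplicative order of q modulo n is l = (n−1)/2. Let D = ⟨q⟩ be the subgroup of squares in (Z/nZ)^× and D′ its nontrivial coset. Let E be a field extension of F_Q containing a primitive n-th root of unity ζ, and set B = Σ_{r∈D′} ζ^r ∈ E. For α ∈ F_Q^× with α ∉ F_q and Tr(α) ≠ 0, set ε = Σ_{r∈D} α^{q^r}. If ε ∉ {l·Tr(α) + B·(Tr(α) + α), l·Tr(α) + (B+1)·(Tr(α) + α)} (computed in E, with l acting as an integer scalar), then α is 0-normal (a normal element) for F_Q/F_q with conventional minimal polynomial m_α(X) = X^n − 1; otherwise α is ((n−1)/2)-normal for F_Q/F_q and m_α = (X − 1)·p̃(X) for some monic irreducible p̃ ∈ F_q[X] of degree (n−1)/2 dividing X^n − 1. -/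
/-!
Index the conjugates of `α` by `ZMod n`, `a i = α ^ (q ^ i)`, and take their Fourier transform
`F j = ∑ i, a i * ζ ^ (i * j)` in `E` (`fourierSum`). Three facts about `F` carry the proof.

* `f(φ_q)(α) = 0` if and only if `f(ζ ^ (-j)) * F j = 0` for all `j` (`lineval_eq_zero_iff`). So the
  conventional minimal polynomial is determined by the support of `F`.
* `g_α(ζ ^ (-j)) = ζ ^ j * F j`, and `X ^ n - 1` is separable, so `α` is `k`-normal where `k` is the
  number of zeros of `F` (`isKNormal_card`).
* `F (q * j)` is `F j ^ q` times a root of unity (`fourierSum_pow`), so the zero set of `F` is a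
  union of orbits of multiplication by `q`, namely of `{0}`, `D` and `D'`.

Here `F 0 = Tr(α) ≠ 0`, and `F` cannot vanish on both `D` and `D'`: by inversion `α` would then
equal all its conjugates and lie in `F_q`. Hence either `F` has no zero, and `m_α = X ^ n - 1`, or `F`
vanishes on exactly one of the two cosets. In the latter case `m_α` is `X - 1` times the minimal
polynomial of the roots of unity belonging to the other coset, which is a factor of the `n`-th
cyclotomic polynomial and so is irreducible of degree equal to the order of `q` modulo `n`.

It remains to recognise the vanishing of `F` on a coset `C`. It is equivalent to the single equation
`∑ j ∈ C, F j = 0` (`fourierSum_zero_of_sum`). For `i ≠ 0` the sums `∑ j ∈ C, ζ ^ (i * j)` are `B` or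
`B + 1`, so in characteristic two this equation reads `ε = l * α + B * (Tr(α) + α)` for `C = D` and
`ε = l * α + (B + 1) * (Tr(α) + α)` for `C = D'`. Replacing `l * α` by `l * Tr(α)` changes nothing
if `l` is even, and exchanges the two equations if `l` is odd.
-/

open Polynomial

/-! ### Fourier transform of the conjugates -/

/-- The discrete Fourier transform `j ↦ ∑ i, a i * ψ (i * j)` on `ZMod n`, with values in `E`. -/
noncomputable def fourierSum {n : ℕ} [Fact n.Prime] {E : Type*} [Field E]
    (ψ : AddChar (ZMod n) E) (a : ZMod n → E) (j : ZMod n) : E :=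
  ∑ i, a i * ψ (i * j)

section Fourier

variable {n : ℕ} [Fact n.Prime] {E : Type*} [Field E] {ψ : AddChar (ZMod n) E}

lemma psi_mul_neg (ψ : AddChar (ZMod n) E) (x : ZMod n) : ψ x * ψ (-x) = 1 := by
  rw [← AddChar.map_add_eq_mul]; simp

lemma psi_nat_mul (ψ : AddChar (ZMod n) E) (q : ℕ) (x : ZMod n) :
    ψ ((q : ZMod n) * x) = ψ x ^ q := by
  rw [← nsmul_eq_mul, AddChar.map_nsmul_eq_pow]

/-- Inversion for a function supported on `C`: its inverse transform recovers it up to `n`. -/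
lemma sum_sum_psi (hψ : ψ.IsPrimitive) (C : Finset (ZMod n)) (F : ZMod n → E) {j₀ : ZMod n}
    (hj₀ : j₀ ∈ C) : ∑ k, (∑ j ∈ C, F j * ψ (-(k * j))) * ψ (k * j₀) = n * F j₀ := by
  simp_rw [Finset.sum_mul]
  rw [Finset.sum_comm]
  have h : ∀ j ∈ C, ∑ k, F j * ψ (-(k * j)) * ψ (k * j₀) = if j = j₀ then n * F j₀ else 0 := by
    intro j _
    have : ∀ k, F j * ψ (-(k * j)) * ψ (k * j₀) = F j * ψ (k * (j₀ - j)) := by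
      intro k
      rw [mul_assoc, ← AddChar.map_add_eq_mul]
      congr 2; ring
    simp_rw [this]
    rw [← Finset.mul_sum, AddChar.sum_mulShift _ hψ]
    by_cases hj : j = j₀
    · subst hj; simp [mul_comm, ZMod.card]
    · simp [hj, sub_eq_zero, Ne.symm hj]
  rw [Finset.sum_congr rfl h]
  simp [hj₀]

lemma fourierSum_inversion (hψ : ψ.IsPrimitive) (a : ZMod n → E) (k : ZMod n) :
    ∑ j, fourierSum ψ a j * ψ (-(j * k)) = n * a k := by
  rw [← sum_sum_psi hψ Finset.univ a (Finset.mem_univ k),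
    ← Equiv.sum_comp (Equiv.neg (ZMod n))]
  refine Finset.sum_congr rfl fun j _ => ?_
  simp only [fourierSum, Equiv.neg_apply]
  congr 1
  · refine Finset.sum_congr rfl fun i _ => ?_
    congr 2; ring
  · congr 1; ring

lemma fourierSum_eq_zero_iff (hψ : ψ.IsPrimitive) (hn : (n : E) ≠ 0) (a : ZMod n → E) :
    (∀ j, fourierSum ψ a j = 0) ↔ ∀ k, a k = 0 := by
  constructor
  · intro h k
    have := fourierSum_inversion hψ a k
    simp only [h, zero_mul, Finset.sum_const_zero] at this
    exact (mul_eq_zero.mp this.symm).resolve_left hn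
  · intro h j
    simp [fourierSum, h]

variable {q : ℕ} {σ : E →+* E} {a : ZMod n → E}

/-- Frobenius-equivariance of the transform of a sequence of conjugates. -/
lemma fourierSum_pow (hσ : ∀ x, σ x = x ^ q) (ha : ∀ i, a i ^ q = a (i + 1)) (j : ZMod n) :
    fourierSum ψ a j ^ q * ψ (q * j) = fourierSum ψ a (q * j) := by
  rw [fourierSum, ← hσ, map_sum, Finset.sum_mul, fourierSum,
    ← Equiv.sum_comp (Equiv.addRight (1 : ZMod n)) (fun i => a i * ψ (i * (q * j)))]
  refine Finset.sum_congr rfl fun i _ => ?_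
  rw [map_mul, hσ, hσ, ha, ← psi_nat_mul, mul_assoc, ← AddChar.map_add_eq_mul,
    Equiv.coe_addRight]
  congr 2; ring

lemma fourierSum_zero_of_orbit (hσ : ∀ x, σ x = x ^ q) (ha : ∀ i, a i ^ q = a (i + 1))
    (hq : q ≠ 0) {j : ZMod n} (hj : fourierSum ψ a j = 0) (t : ℕ) :
    fourierSum ψ a ((q : ZMod n) ^ t * j) = 0 := by
  induction t with
  | zero => simpa using hj
  | succ t ih => rw [pow_succ', mul_assoc, ← fourierSum_pow hσ ha, ih]; simp [hq]

/-- If the transform sums to zero over a set `C` stable under multiplication by `q`, then it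
vanishes on `C`: the inverse transform of its restriction to `C` is the sequence of conjugates of
that sum. -/
lemma fourierSum_zero_of_sum (hψ : ψ.IsPrimitive) (hn : (n : E) ≠ 0)
    (hσ : ∀ x, σ x = x ^ q) (ha : ∀ i, a i ^ q = a (i + 1)) (hq : q ≠ 0)
    {C : Finset (ZMod n)}
    (hC : ∀ f : ZMod n → E, ∑ j ∈ C, f (q * j) = ∑ j ∈ C, f j)
    (h0 : ∑ j ∈ C, fourierSum ψ a j = 0) {j : ZMod n} (hj : j ∈ C) :
    fourierSum ψ a j = 0 := by
  set S : ZMod n → E := fun k => ∑ j ∈ C, fourierSum ψ a j * ψ (-(k * j)) with hS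
  have hstep : ∀ k, S k ^ q = S (k + 1) := by
    intro k
    simp only [hS]
    rw [← hσ, map_sum, ← hC (fun j => fourierSum ψ a j * ψ (-((k + 1) * j)))]
    refine Finset.sum_congr rfl fun i _ => ?_
    rw [map_mul, hσ, hσ, ← fourierSum_pow hσ ha, ← psi_nat_mul, mul_assoc,
      ← AddChar.map_add_eq_mul]
    congr 2; ring
  have hSn : ∀ k : ℕ, S (k : ZMod n) = 0 := by
    intro k
    induction k with
    | zero => simpa [hS] using h0
    | succ k ih => rw [Nat.cast_succ, ← hstep, ih, zero_pow hq]
  have hSk : ∀ k, ∑ j ∈ C, fourierSum ψ a j * ψ (-(k * j)) = 0 := fun k => by simpa using hSn k.val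
  have := sum_sum_psi hψ C (fourierSum ψ a) hj
  rw [Finset.sum_eq_zero (fun k _ => by rw [hSk, zero_mul])] at this
  exact (mul_eq_zero.mp this.symm).resolve_left hn

end Fourier

/-! ### Annihilators of `α` -/

section Annihilator

variable {n q : ℕ} [Fact n.Prime] {Fq FQ E : Type*} [Field Fq] [Fintype Fq] [Field FQ]
  [Field E] [Algebra Fq FQ] [Algebra FQ E] [Algebra Fq E] [IsScalarTower Fq FQ E]
  {ψ : AddChar (ZMod n) E} {σ : E →+* E} {a : ZMod n → E} {α : FQ}

/-- In the transformed picture `f(φ_q)` acts diagonally, through the values of `f` at the `n`-th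
roots of unity. -/
lemma lineval_eq_zero_iff_s17 (hψ : ψ.IsPrimitive) (hn : (n : E) ≠ 0) (hcard : Fintype.card Fq = q)
    (hσ : ∀ x, σ x = x ^ q) (ha : ∀ i, a i ^ q = a (i + 1))
    (haα : ∀ k : ℕ, a k = algebraMap FQ E (α ^ q ^ k)) (f : Fq[X]) :
    lineval q f α = 0 ↔ ∀ j, aeval (ψ (-j)) f = 0 ∨ fourierSum ψ a j = 0 := by
  set b : ZMod n → E := fun k => f.sum fun i c => algebraMap Fq E c * a (k + i) with hb
  have hq : q ≠ 0 := hcard ▸ Fintype.card_ne_zero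
  have hb0 : b 0 = algebraMap FQ E (lineval q f α) := by
    simp only [hb, lineval, Polynomial.sum, map_sum, map_mul, zero_add, haα,
      ← IsScalarTower.algebraMap_apply]
  have hstep : ∀ k, b k ^ q = b (k + 1) := by
    intro k
    simp only [hb, Polynomial.sum]
    rw [← hσ, map_sum]
    refine Finset.sum_congr rfl fun i _ => ?_
    rw [map_mul, hσ, hσ, ha, ← map_pow, ← hcard, FiniteField.pow_card]
    congr 2; ring
  have hball : lineval q f α = 0 ↔ ∀ k, b k = 0 := by
    constructor
    · intro h
      have hk : ∀ k : ℕ, b (k : ZMod n) = 0 := by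
        intro k
        induction k with
        | zero => simp [hb0, h]
        | succ k ih => rw [Nat.cast_succ, ← hstep, ih, zero_pow hq]
      exact fun k => by simpa using hk k.val
    · intro h
      have := h 0
      rw [hb0] at this
      exact (map_eq_zero _).mp this
  rw [hball, ← fourierSum_eq_zero_iff hψ hn]
  refine forall_congr' fun j => ?_
  rw [← mul_eq_zero]
  have : fourierSum ψ b j = aeval (ψ (-j)) f * fourierSum ψ a j := by
    simp only [fourierSum, hb, Polynomial.sum, aeval_def, eval₂_eq_sum, Finset.sum_mul]
    rw [Finset.sum_comm]
    refine Finset.sum_congr rfl fun i _ => ?_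
    rw [Finset.mul_sum, ← Equiv.sum_comp (Equiv.addRight (i : ZMod n))
      (fun k => _ * (a k * ψ (k * j)))]
    refine Finset.sum_congr rfl fun k _ => ?_
    rw [← psi_nat_mul, Equiv.coe_addRight]
    have : ψ (k * j) = ψ (i * -j) * ψ ((k + i) * j) := by
      rw [← AddChar.map_add_eq_mul]; congr 1; ring
    rw [this]; ring
  rw [this]

end Annihilator

/-! ### Degree of normality -/

section Normality

variable {n q : ℕ} [Fact n.Prime] {FQ E : Type*} [Field FQ] [Field E] [Algebra FQ E]
  {ψ : AddChar (ZMod n) E} {a : ZMod n → E} {α : FQ}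

lemma psi_injective (hψ : ψ.IsPrimitive) : Function.Injective ψ :=
  AddChar.injective_iff.mpr fun x hx => (hψ.zmod_char_eq_one_iff n x).mp hx

lemma psi_pow_card (ψ : AddChar (ZMod n) E) (j : ZMod n) : ψ j ^ n = 1 := by
  rw [← psi_nat_mul]; simp

lemma psi_one_isPrimitiveRoot (hψ : ψ.IsPrimitive) : IsPrimitiveRoot (ψ 1) n := by
  refine IsPrimitiveRoot.mk_of_lt _ (Fact.out : n.Prime).pos (psi_pow_card ψ 1) ?_
  intro l hl hln h
  rw [← psi_nat_mul, mul_one, hψ.zmod_char_eq_one_iff, ZMod.natCast_eq_zero_iff] at h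
  exact absurd (Nat.le_of_dvd hl h) (by lia)

lemma aeval_gpoly (haα : ∀ k : ℕ, a k = algebraMap FQ E (α ^ q ^ k)) (j : ZMod n) :
    aeval (ψ (-j)) (gpoly q n α) = ψ j * fourierSum ψ a j := by
  have hn0 : 0 < n := (Fact.out : n.Prime).pos
  have hz : ∀ g : ZMod n → E, ∑ i, g i = ∑ i ∈ Finset.range n, g i := by
    intro g
    refine (Finset.sum_nbij' (fun i : ℕ => (i : ZMod n)) (fun i => i.val) ?_ ?_ ?_ ?_ ?_).symm
    · intro i _; exact Finset.mem_univ _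
    · intro i _; exact Finset.mem_range.mpr (ZMod.val_lt i)
    · intro i hi; exact ZMod.val_cast_of_lt (Finset.mem_range.mp hi)
    · intro i _; simp
    · intro i _; rfl
  rw [fourierSum, hz, Finset.mul_sum, gpoly, map_sum]
  refine Finset.sum_congr rfl fun i hi => ?_
  have hi : i < n := Finset.mem_range.mp hi
  rw [map_mul, aeval_C, ← haα, map_pow, aeval_X, ← psi_nat_mul, mul_left_comm,
    ← AddChar.map_add_eq_mul]
  congr 2
  rw [Nat.cast_sub (by lia), Nat.cast_sub (by lia)]
  simp; ring

/-- The defect of normality is the number of zeros of the transform. -/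
lemma isKNormal_card_s17 (hψ : ψ.IsPrimitive) (hn : (n : E) ≠ 0)
    (hroots : ∀ x : E, x ^ n = 1 → ∃ j, ψ j = x)
    (haα : ∀ k : ℕ, a k = algebraMap FQ E (α ^ q ^ k)) {Z : Finset (ZMod n)}
    (hZ : ∀ j, j ∈ Z ↔ fourierSum ψ a j = 0) : IsKNormal q n Z.card α := by
  classical
  have hn0 : n ≠ 0 := (Fact.out : n.Prime).ne_zero
  unfold IsKNormal
  let := Classical.decEq (Polynomial FQ)
  set d := EuclideanDomain.gcd (gpoly q n α) (X ^ n - 1) with hd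
  have hnF : (n : FQ) ≠ 0 := fun h => hn (by rw [← map_natCast (algebraMap FQ E), h, map_zero])
  have hXn : (X ^ n - 1 : FQ[X]) ≠ 0 := (monic_X_pow_sub_C (1 : FQ) hn0).ne_zero
  have hdvd : d ∣ X ^ n - 1 := EuclideanDomain.gcd_dvd_right _ _
  have hd0 : d ≠ 0 := fun h => hXn (zero_dvd_iff.mp (h ▸ hdvd))
  have hsep : d.Separable :=
    Separable.of_dvd (by simpa using separable_X_pow_sub_C (1 : FQ) hnF one_ne_zero) hdvd
  have hsplitX : ((X ^ n - 1 : FQ[X]).map (algebraMap FQ E)).Splits := by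
    simpa using X_pow_sub_one_splits (psi_one_isPrimitiveRoot hψ)
  have hsplit : (d.map (algebraMap FQ E)).Splits :=
    hsplitX.of_dvd ((Polynomial.map_ne_zero_iff (algebraMap FQ E).injective).mpr hXn)
      (Polynomial.map_dvd _ hdvd)
  rw [← card_rootSet_eq_natDegree hsep hsplit, ← Finset.card_image_of_injective Z
    ((psi_injective hψ).comp neg_injective), ← Set.toFinset_card]
  congr 1
  ext x
  simp only [Set.mem_toFinset, mem_rootSet, Finset.mem_image, hZ, Function.comp]
  have hgcd : aeval x d = 0 ↔ aeval x (gpoly q n α) = 0 ∧ aeval x (X ^ n - 1 : FQ[X]) = 0 := by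
    constructor
    · intro h
      exact ⟨aeval_eq_zero_of_dvd_aeval_eq_zero (EuclideanDomain.gcd_dvd_left _ _) h,
        aeval_eq_zero_of_dvd_aeval_eq_zero hdvd h⟩
    · rintro ⟨h1, h2⟩
      rw [hd, EuclideanDomain.gcd_eq_gcd_ab, map_add, map_mul, map_mul, h1, h2]; simp
  rw [hgcd]
  have hψ0 : ∀ j, ψ j ≠ 0 := fun j h => by simpa [h] using psi_mul_neg ψ j
  constructor
  · rintro ⟨-, h1, h2⟩
    obtain ⟨j, hj⟩ := hroots x (by simpa [sub_eq_zero] using h2)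
    refine ⟨-j, ?_, by simpa using hj⟩
    rw [← hj, ← neg_neg j, aeval_gpoly haα] at h1
    exact (mul_eq_zero.mp h1).resolve_left (hψ0 _)
  · rintro ⟨j, hj, rfl⟩
    refine ⟨hd0, ?_, ?_⟩
    · rw [aeval_gpoly haα, hj, mul_zero]
    · simp [psi_pow_card]

end Normality

/-! ### The conventional minimal polynomial -/

section MinimalPolynomial

variable {n q : ℕ} [Fact n.Prime] {Fq FQ E : Type*} [Field Fq] [Fintype Fq] [Field FQ]
  [Field E] [Algebra Fq FQ] [Algebra FQ E] [Algebra Fq E] [IsScalarTower Fq FQ E]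
  {ψ : AddChar (ZMod n) E} {σ : E →+* E} {a : ZMod n → E} {α : FQ}

lemma isMinPoly_of_forall_ne_zero (hψ : ψ.IsPrimitive) (hn : (n : E) ≠ 0)
    (hroots : ∀ x : E, x ^ n = 1 → ∃ j, ψ j = x) (hcard : Fintype.card Fq = q)
    (hσ : ∀ x, σ x = x ^ q) (ha : ∀ i, a i ^ q = a (i + 1))
    (haα : ∀ k : ℕ, a k = algebraMap FQ E (α ^ q ^ k))
    (hF : ∀ j, fourierSum ψ a j ≠ 0) : IsMinPoly q α (X ^ n - 1 : Fq[X]) := by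
  have hn0 : n ≠ 0 := (Fact.out : n.Prime).ne_zero
  have hmon : (X ^ n - 1 : Fq[X]).Monic := monic_X_pow_sub_C (1 : Fq) hn0
  have key := lineval_eq_zero_iff_s17 (α := α) hψ hn hcard hσ ha haα
  refine ⟨hmon, (key _).mpr fun j => Or.inl (by simp [psi_pow_card]), fun g hg => ?_⟩
  have hg' := fun j => ((key g).mp hg j).resolve_right (hF j)
  rw [← map_dvd_map (algebraMap Fq E) (algebraMap Fq E).injective hmon]
  rw [Polynomial.map_sub, Polynomial.map_pow, map_X, Polynomial.map_one,
    X_pow_sub_one_eq_prod (Nat.pos_of_ne_zero hn0) (psi_one_isPrimitiveRoot hψ)]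
  refine Finset.prod_dvd_of_coprime
    (fun x _ y _ hxy => pairwise_coprime_X_sub_C Function.injective_id hxy) fun x hx => ?_
  obtain ⟨j, rfl⟩ := hroots x ((mem_nthRootsFinset (Nat.pos_of_ne_zero hn0) _).mp hx)
  rw [dvd_iff_isRoot, IsRoot, eval_map_algebraMap, ← neg_neg j]
  exact hg' _

/-- If the transform is supported on `0` and one orbit of multiplication by `q`, the conventional
minimal polynomial is `X - 1` times the minimal polynomial of the roots of unity in that orbit. -/
lemma exists_isMinPoly_of_orbit {p m : ℕ} [Fact p.Prime] (hpn : p.Coprime n) (hqp : q = p ^ m)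
    (hψ : ψ.IsPrimitive) (hn : (n : E) ≠ 0) (hcard : Fintype.card Fq = q)
    (hσ : ∀ x, σ x = x ^ q) (ha : ∀ i, a i ^ q = a (i + 1))
    (haα : ∀ k : ℕ, a k = algebraMap FQ E (α ^ q ^ k)) {j₀ : ZMod n} (hj₀ : j₀ ≠ 0)
    (hF : ∀ j, fourierSum ψ a j ≠ 0 ↔ j = 0 ∨ ∃ t : ℕ, j = (q : ZMod n) ^ t * j₀) :
    ∃ m₂ : Fq[X], m₂.Monic ∧ Irreducible m₂ ∧ m₂.natDegree = orderOf (q : ZMod n) ∧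
      m₂ ∣ (X ^ n - 1) ∧ IsMinPoly q α ((X - 1) * m₂) := by
  have hn0 : n ≠ 0 := (Fact.out : n.Prime).ne_zero
  set x := ψ (-j₀) with hx
  have hxn : x ^ n = 1 := psi_pow_card ψ _
  have hx1 : x ≠ 1 := fun h => hj₀ (neg_eq_zero.mp ((hψ.zmod_char_eq_one_iff n _).mp h))
  have hXn : aeval x (X ^ n - 1 : Fq[X]) = 0 := by simp [hxn]
  have hint : IsIntegral Fq x := ⟨X ^ n - 1, monic_X_pow_sub_C (1 : Fq) hn0, hXn⟩
  have hirr := minpoly.irreducible hint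
  have hcyc : minpoly Fq x ∣ cyclotomic n Fq := by
    refine minpoly.dvd _ _ ?_
    rw [← cyclotomic_prime_mul_X_sub_one Fq n, map_mul] at hXn
    refine (mul_eq_zero.mp hXn).resolve_right ?_
    simpa [sub_eq_zero] using hx1
  have hcop : IsCoprime (X - 1) (minpoly Fq x) := by
    refine (hirr.coprime_iff_not_dvd.mpr fun h => hx1 ?_).symm
    have := aeval_eq_zero_of_dvd_aeval_eq_zero h (minpoly.aeval Fq x)
    simpa [sub_eq_zero] using this
  have key := lineval_eq_zero_iff_s17 (α := α) hψ hn hcard hσ ha haα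
  have horb : ∀ f : Fq[X], aeval x f = 0 → ∀ t : ℕ, aeval (ψ (-((q : ZMod n) ^ t * j₀))) f = 0 := by
    intro f hf t
    have : ψ (-((q : ZMod n) ^ t * j₀)) = x ^ q ^ t := by
      rw [← psi_nat_mul]; push_cast; congr 1; ring
    rw [this]
    clear this
    induction t with
    | zero => simpa using hf
    | succ t ih =>
      rw [pow_succ, pow_mul, ← hcard, ← expand_aeval, FiniteField.expand_card, map_pow, hcard, ih,
        zero_pow (hcard ▸ Fintype.card_ne_zero)]
  refine ⟨minpoly Fq x, minpoly.monic hint, hirr, ?_, minpoly.dvd _ _ hXn, ?_, ?_, ?_⟩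
  · rw [natDegree_of_dvd_cyclotomic_of_irreducible (hcard.trans hqp) hpn hcyc hirr, ← orderOf_units]
    simp [hqp]
  · exact (monic_X_sub_C (1 : Fq)).mul (minpoly.monic hint)
  · rw [key]
    intro j
    by_cases hj : fourierSum ψ a j = 0
    · exact Or.inr hj
    left
    rcases (hF j).mp hj with rfl | ⟨t, rfl⟩
    · simp
    · rw [map_mul, horb _ (minpoly.aeval Fq x), mul_zero]
  · intro g hg
    rw [key] at hg
    refine hcop.mul_dvd ?_ (minpoly.dvd _ _ ?_)
    · have := (hg 0).resolve_right ((hF 0).mpr (Or.inl rfl))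
      rw [neg_zero, AddChar.map_zero_eq_one, ← map_one (algebraMap Fq E),
        aeval_algebraMap_apply, map_eq_zero, coe_aeval_eq_eval] at this
      rwa [← C_1, dvd_iff_isRoot]
    · exact (hg j₀).resolve_right ((hF j₀).mpr (Or.inr ⟨0, by simp⟩))

end MinimalPolynomial

/-! ### The cosets `D` and `D'` -/

section Cosets

variable {n q : ℕ} [Fact n.Prime] {D D' : Finset (ZMod n)}

lemma sum_mul_left {M : Type*} [AddCommMonoid M] {C C' : Finset (ZMod n)} {i : ZMod n}
    (hi : i ≠ 0) (hmaps : ∀ j ∈ C, i * j ∈ C') (hcard : C.card = C'.card) (f : ZMod n → M) :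
    ∑ j ∈ C, f (i * j) = ∑ j ∈ C', f j := by
  have hinj : Set.InjOn (fun j => i * j) C := fun x _ y _ h => mul_left_cancel₀ hi h
  refine Finset.sum_nbij (fun j => i * j) hmaps hinj ?_ fun _ _ => rfl
  exact Finset.surjOn_of_injOn_of_card_le _ hmaps hinj hcard.ge

lemma exists_mul_eq {C C' : Finset (ZMod n)} {i : ZMod n}
    (hi : i ≠ 0) (hmaps : ∀ j ∈ C, i * j ∈ C') (hcard : C.card = C'.card) {k : ZMod n}
    (hk : k ∈ C') : ∃ j ∈ C, i * j = k := by
  have hinj : Set.InjOn (fun j => i * j) C := fun x _ y _ h => mul_left_cancel₀ hi h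
  simpa using Finset.surjOn_of_injOn_of_card_le _ hmaps hinj hcard.ge hk

lemma sum_univ_split {M : Type*} [AddCommMonoid M] (h0 : (0 : ZMod n) ∉ D)
    (hD' : ∀ x : ZMod n, x ∈ D' ↔ (x ≠ 0 ∧ x ∉ D)) (f : ZMod n → M) :
    ∑ i, f i = f 0 + (∑ i ∈ D, f i + ∑ i ∈ D', f i) := by
  have hdisj : Disjoint D D' := Finset.disjoint_left.mpr fun x hx hx' => ((hD' x).mp hx').2 hx
  have h0' : (0 : ZMod n) ∉ D ∪ D' := by simp [h0, hD']
  rw [← Finset.sum_union hdisj, ← Finset.sum_insert h0']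
  refine Finset.sum_congr ?_ fun _ _ => rfl
  ext x
  simp only [Finset.mem_univ, Finset.mem_insert, Finset.mem_union, hD', true_iff]
  tauto

lemma zero_notMem_powers (hQ : (q : ZMod n) ≠ 0)
    (hD : ∀ x : ZMod n, x ∈ D ↔ ∃ t : ℕ, x = (q : ZMod n) ^ t) : (0 : ZMod n) ∉ D := by
  rw [hD]
  rintro ⟨t, ht⟩
  exact pow_ne_zero t hQ ht.symm

/-- `D` has index two: it and its complement in the nonzero residues have equal size. -/
lemma card_cosets (hodd : Odd n) (hQ : (q : ZMod n) ≠ 0)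
    (horder : orderOf (q : ZMod n) = (n - 1) / 2)
    (hD : ∀ x : ZMod n, x ∈ D ↔ ∃ t : ℕ, x = (q : ZMod n) ^ t)
    (hD' : ∀ x : ZMod n, x ∈ D' ↔ (x ≠ 0 ∧ x ∉ D)) :
    D.card = (n - 1) / 2 ∧ D'.card = (n - 1) / 2 := by
  have h1 : D.card = (n - 1) / 2 := by
    have hpos : 0 < orderOf (q : ZMod n) := by
      have := (Fact.out : n.Prime).two_le
      obtain ⟨k, rfl⟩ := hodd
      lia
    have himg : D = (Finset.range (orderOf (q : ZMod n))).image ((q : ZMod n) ^ ·) := by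
      ext x
      rw [hD, Finset.mem_image]
      constructor
      · rintro ⟨t, rfl⟩
        exact ⟨t % _, Finset.mem_range.mpr (Nat.mod_lt _ hpos), pow_mod_orderOf _ _⟩
      · rintro ⟨t, -, rfl⟩
        exact ⟨t, rfl⟩
    rw [himg, Finset.card_image_of_injOn, Finset.card_range, horder]
    simpa using pow_injOn_Iio_orderOf (x := (q : ZMod n))
  refine ⟨h1, ?_⟩
  have h2 := sum_univ_split (zero_notMem_powers hQ hD) hD' (fun _ => 1)
  simp only [Finset.sum_const, smul_eq_mul, mul_one, Finset.card_univ, ZMod.card, h1] at h2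
  obtain ⟨k, rfl⟩ := hodd
  lia

/-- Multiplication table of the two cosets. -/
lemma mul_mem_cosets (hQ : (q : ZMod n) ≠ 0)
    (hD : ∀ x : ZMod n, x ∈ D ↔ ∃ t : ℕ, x = (q : ZMod n) ^ t)
    (hD' : ∀ x : ZMod n, x ∈ D' ↔ (x ≠ 0 ∧ x ∉ D)) (hc : D.card = D'.card) (i j : ZMod n) :
    (i ∈ D → j ∈ D → i * j ∈ D) ∧ (i ∈ D → j ∈ D' → i * j ∈ D') ∧
      (i ∈ D' → j ∈ D → i * j ∈ D') ∧ (i ∈ D' → j ∈ D' → i * j ∈ D) := by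
  have h0 := zero_notMem_powers hQ hD
  have hne : ∀ {x}, x ∈ D → x ≠ 0 := fun hx h => h0 (h ▸ hx)
  have hDD : ∀ {x y}, x ∈ D → y ∈ D → x * y ∈ D := by
    intro x y hx hy
    rw [hD] at *
    obtain ⟨s, rfl⟩ := hx
    obtain ⟨t, rfl⟩ := hy
    exact ⟨s + t, (pow_add _ _ _).symm⟩
  have hDD' : ∀ {x y}, x ∈ D → y ∈ D' → x * y ∈ D' := by
    intro x y hx hy
    have hy' := (hD' y).mp hy
    refine (hD' _).mpr ⟨mul_ne_zero (hne hx) hy'.1, fun h => hy'.2 ?_⟩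
    obtain ⟨k, hk, hxk⟩ := exists_mul_eq (hne hx) (fun k hk => hDD hx hk) rfl h
    exact mul_left_cancel₀ (hne hx) hxk ▸ hk
  refine ⟨hDD, hDD', fun hi hj => mul_comm j i ▸ hDD' hj hi, fun hi hj => ?_⟩
  have hi0 := ((hD' i).mp hi).1
  have hj' := (hD' j).mp hj
  by_contra h
  -- `i * D` already exhausts `D'`, so `i * j` cannot lie in `D'` as well
  obtain ⟨k, hk, hik⟩ := exists_mul_eq hi0 (fun k hk => mul_comm k i ▸ hDD' hk hi) hc
    ((hD' (i * j)).mpr ⟨mul_ne_zero hi0 hj'.1, h⟩)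
  exact hj'.2 (mul_left_cancel₀ hi0 hik ▸ hk)

end Cosets

/-- The image of `Fq` already contains all roots of `X ^ q - X`, where `q = card Fq`. -/
lemma mem_range_of_pow_card_eq {Fq FQ : Type*} [Field Fq] [Fintype Fq] [Field FQ] [Algebra Fq FQ]
    {α : FQ} (h : α ^ Fintype.card Fq = α) : α ∈ Set.range (algebraMap Fq FQ) := by
  classical
  by_contra hα
  have hq : 1 < Fintype.card Fq := Fintype.one_lt_card
  have hp : (X ^ Fintype.card Fq - X : FQ[X]) ≠ 0 := FiniteField.X_pow_card_sub_X_ne_zero FQ hq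
  have hsub : insert α (Finset.univ.image (algebraMap Fq FQ)) ⊆
      (X ^ Fintype.card Fq - X : FQ[X]).roots.toFinset := by
    intro x hx
    rw [Multiset.mem_toFinset, mem_roots hp]
    rcases Finset.mem_insert.mp hx with rfl | hx
    · simp [h]
    · obtain ⟨c, -, rfl⟩ := Finset.mem_image.mp hx
      simp [← map_pow, FiniteField.pow_card]
  have h1 := (Finset.card_le_card hsub).trans
    ((Multiset.toFinset_card_le _).trans (card_roots' _))
  rw [Finset.card_insert_of_notMem (by simpa using hα),
    Finset.card_image_of_injective _ (algebraMap Fq FQ).injective,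
    FiniteField.X_pow_card_sub_X_natDegree_eq FQ hq, Finset.card_univ] at h1
  lia

/-! ### Proof of the theorem -/

theorem stmt_17 (m n q : ℕ) (hnp : n.Prime) (hn3 : 3 ≤ n) (hnodd : Odd n)
    (hm : 0 < m) (hq : q = 2 ^ m)
    {Fq FQ E : Type*} [Field Fq] [Fintype Fq] [Field FQ] [Fintype FQ] [Field E]
    [Algebra Fq FQ] [Algebra FQ E] [Algebra Fq E] [IsScalarTower Fq FQ E]
    (hcard : Fintype.card Fq = q) (hcardQ : Fintype.card FQ = q ^ n)
    (horder : orderOf (q : ZMod n) = (n - 1) / 2)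
    -- D = ⟨q⟩ is the subgroup of squares of (ZMod n)ˣ, D' its nontrivial coset
    (D D' : Finset (ZMod n))
    (hD : ∀ x : ZMod n, x ∈ D ↔ ∃ t : ℕ, x = (q : ZMod n) ^ t)
    (hD' : ∀ x : ZMod n, x ∈ D' ↔ (x ≠ 0 ∧ x ∉ D))
    -- ζ a primitive n-th root of unity in the extension E of F_Q
    (ζ : E) (hζ : IsPrimitiveRoot ζ n)
    (α : FQ) (hα : α ≠ 0)
    (hα2 : α ∉ Set.range (algebraMap Fq FQ))
    (htr : ∑ i ∈ Finset.range n, α ^ q ^ i ≠ 0) :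
    let l : ℕ := (n - 1) / 2
    let Tr : FQ := ∑ i ∈ Finset.range n, α ^ q ^ i
    let B : E := ∑ r ∈ D', ζ ^ r.val
    let ε : FQ := ∑ r ∈ D, α ^ q ^ r.val
    ((algebraMap FQ E ε ≠ (l : E) * algebraMap FQ E Tr + B * algebraMap FQ E (Tr + α) ∧
        algebraMap FQ E ε ≠ (l : E) * algebraMap FQ E Tr + (B + 1) * algebraMap FQ E (Tr + α)) →
      IsKNormal q n 0 α ∧ IsMinPoly q α (Polynomial.X ^ n - 1 : Polynomial Fq)) ∧
    ((algebraMap FQ E ε = (l : E) * algebraMap FQ E Tr + B * algebraMap FQ E (Tr + α) ∨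
        algebraMap FQ E ε = (l : E) * algebraMap FQ E Tr + (B + 1) * algebraMap FQ E (Tr + α)) →
      IsKNormal q n ((n - 1) / 2) α ∧
        ∃ m₂ : Polynomial Fq, m₂.Monic ∧ Irreducible m₂ ∧ m₂.natDegree = (n - 1) / 2 ∧
          m₂ ∣ (Polynomial.X ^ n - 1) ∧
          IsMinPoly q α ((Polynomial.X - 1) * m₂)) := by
  classical
  intro l Tr B ε
  have : Fact n.Prime := ⟨hnp⟩
  have : CharP Fq 2 := charP_of_card_eq_prime_pow (hcard.trans hq)
  have : CharP E 2 := charP_of_injective_algebraMap (algebraMap Fq E).injective 2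
  have hq0 : q ≠ 0 := hcard ▸ Fintype.card_ne_zero
  have h2n : Nat.Coprime 2 n := Nat.coprime_two_left.mpr hnodd
  have hnE : (n : E) ≠ 0 := fun h => by
    have := (CharP.cast_eq_zero_iff E 2 n).mp h
    obtain ⟨k, rfl⟩ := hnodd
    lia
  have hQ : (q : ZMod n) ≠ 0 := by
    rw [Ne, ZMod.natCast_eq_zero_iff, ← Nat.Prime.coprime_iff_not_dvd hnp, hq]
    exact (h2n.pow_left m).symm
  obtain ⟨hcD, hcD'⟩ := card_cosets hnodd hQ horder hD hD'
  have hc : D.card = D'.card := hcD.trans hcD'.symm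
  have h0D := zero_notMem_powers hQ hD
  have htab := mul_mem_cosets hQ hD hD' hc
  have hQD : (q : ZMod n) ∈ D := (hD _).mpr ⟨1, (pow_one _).symm⟩
  -- the character `r ↦ ζ ^ r` and the sequence of conjugates of `α`, both indexed by `ZMod n`
  set ψ : AddChar (ZMod n) E := AddChar.zmodChar n ((IsPrimitiveRoot.iff_def ζ n).mp hζ).left
    with hψdef
  have hψ : ψ.IsPrimitive := AddChar.zmodChar_primitive_of_primitive_root n hζ
  have hψval : ∀ r : ZMod n, ψ r = ζ ^ r.val := fun r => rfl
  have hroots : ∀ x : E, x ^ n = 1 → ∃ j, ψ j = x := by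
    intro x hx
    obtain ⟨i, -, rfl⟩ := hζ.eq_pow_of_pow_eq_one hx
    exact ⟨(i : ZMod n), AddChar.zmodChar_apply' _ i⟩
  set σ : E →+* E := iterateFrobenius E 2 m with hσdef
  have hσ : ∀ x, σ x = x ^ q := fun x => by rw [hσdef, iterateFrobenius_def, hq]
  set a : ZMod n → E := fun i => algebraMap FQ E (α ^ q ^ i.val) with hadef
  have haα : ∀ k : ℕ, a k = algebraMap FQ E (α ^ q ^ k) := by
    intro k
    simp only [hadef, ZMod.val_natCast]
    congr 1
    conv_rhs => rw [← Nat.div_add_mod k n, pow_add, pow_mul, pow_mul, ← hcardQ,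
      FiniteField.pow_card_pow]
  have ha : ∀ i, a i ^ q = a (i + 1) := by
    intro i
    have h1 := haα i.val
    have h2 := haα (i.val + 1)
    rw [Nat.cast_succ, ZMod.natCast_zmod_val] at h2
    rw [ZMod.natCast_zmod_val] at h1
    rw [h1, h2, ← map_pow, ← pow_mul, ← pow_succ]
  have ha0 : a 0 = algebraMap FQ E α := by simp [hadef]
  have hαq : α ^ q ≠ α := fun h => hα2 (mem_range_of_pow_card_eq (hcard ▸ h))
  have ha01 : a 1 ≠ a 0 := by
    have := ha 0
    rw [zero_add] at this
    rw [← this, ha0, ← map_pow]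
    exact fun h => hαq ((algebraMap FQ E).injective h)
  have hF0 : fourierSum ψ a 0 = algebraMap FQ E Tr := by
    have : fourierSum ψ a 0 = ∑ i, a i := by simp [fourierSum]
    rw [this, map_sum]
    refine Finset.sum_nbij' (fun i => i.val) (fun i : ℕ => (i : ZMod n)) ?_ ?_ ?_ ?_ ?_
    · intro i _; exact Finset.mem_range.mpr (ZMod.val_lt i)
    · intro i _; exact Finset.mem_univ _
    · intro i _; simp
    · intro i hi; exact ZMod.val_cast_of_lt (Finset.mem_range.mp hi)
    · intro i _; rfl
  have hF0ne : fourierSum ψ a 0 ≠ 0 := by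
    rw [hF0]; exact (_root_.map_ne_zero _).mpr htr
  have hε : algebraMap FQ E ε = ∑ r ∈ D, a r := map_sum _ _ _
  have hTr : algebraMap FQ E Tr = a 0 + (∑ r ∈ D, a r + ∑ r ∈ D', a r) := by
    rw [← hF0, ← sum_univ_split h0D hD' a]; simp [fourierSum]
  have htwo : (2 : E) = 0 := CharTwo.two_eq_zero
  have hB : B = ∑ r ∈ D', ψ r := rfl
  have hB1 : ∑ r ∈ D, ψ r = B + 1 := by
    have h := AddChar.sum_mulShift (1 : ZMod n) hψ
    simp only [mul_one, one_ne_zero, if_false, Nat.cast_zero] at h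
    rw [sum_univ_split h0D hD' ψ, AddChar.map_zero_eq_one, ← hB] at h
    linear_combination h - (B + 1) * htwo
  -- the Gaussian periods `∑ j ∈ C, ψ (i * j)`, for `C` either coset, are `B` or `B + 1`
  have hP : ∀ C : Finset (ZMod n), ∑ j ∈ C, fourierSum ψ a j =
      ∑ i, a i * ∑ j ∈ C, ψ (i * j) := by
    intro C
    simp only [fourierSum, Finset.mul_sum]
    exact Finset.sum_comm
  have hne : ∀ {x}, x ∈ D → x ≠ 0 := fun hx h => h0D (h ▸ hx)
  have hne' : ∀ {x}, x ∈ D' → x ≠ 0 := fun hx => ((hD' _).mp hx).1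
  have hSD : ∑ j ∈ D, fourierSum ψ a j =
      (l : E) * a 0 + ((B + 1) * ∑ r ∈ D, a r + B * ∑ r ∈ D', a r) := by
    rw [hP, sum_univ_split h0D hD', Finset.mul_sum D a, Finset.mul_sum D' a]
    refine congrArg₂ _ ?_ (congrArg₂ _ (Finset.sum_congr rfl fun i hi => ?_)
      (Finset.sum_congr rfl fun i hi => ?_))
    · simp [hcD, l, mul_comm]
    · rw [sum_mul_left (hne hi) (fun j => (htab i j).1 hi) rfl, hB1, mul_comm]
    · rw [sum_mul_left (hne' hi) (fun j => (htab i j).2.2.1 hi) hc, ← hB, mul_comm]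
  have hSD' : ∑ j ∈ D', fourierSum ψ a j =
      (l : E) * a 0 + (B * ∑ r ∈ D, a r + (B + 1) * ∑ r ∈ D', a r) := by
    rw [hP, sum_univ_split h0D hD', Finset.mul_sum D a, Finset.mul_sum D' a]
    refine congrArg₂ _ ?_ (congrArg₂ _ (Finset.sum_congr rfl fun i hi => ?_)
      (Finset.sum_congr rfl fun i hi => ?_))
    · simp [hcD', l, mul_comm]
    · rw [sum_mul_left (hne hi) (fun j => (htab i j).2.1 hi) rfl, ← hB, mul_comm]
    · rw [sum_mul_left (hne' hi) (fun j => (htab i j).2.2.2 hi) hc.symm, hB1, mul_comm]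
  have hcond : (algebraMap FQ E ε = (l : E) * algebraMap FQ E Tr + B * algebraMap FQ E (Tr + α) ∨
      algebraMap FQ E ε = (l : E) * algebraMap FQ E Tr + (B + 1) * algebraMap FQ E (Tr + α)) ↔
      (∑ j ∈ D, fourierSum ψ a j = 0 ∨ ∑ j ∈ D', fourierSum ψ a j = 0) := by
    rw [hSD, hSD', map_add, ← ha0, hε, hTr]
    generalize a 0 = x
    generalize ∑ r ∈ D, a r = y
    generalize ∑ r ∈ D', a r = z
    -- replacing `l * α` by `l * Tr(α)` exchanges the two conditions exactly when `l` is odd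
    rcases Nat.even_or_odd l with hl | hl
    · have hl0 : (l : E) = 0 := (CharP.cast_eq_zero_iff E 2 l).mpr hl.two_dvd
      rw [hl0]
      refine or_congr ⟨fun h => ?_, fun h => ?_⟩ ⟨fun h => ?_, fun h => ?_⟩
      · linear_combination h + (B * (x + y + z)) * htwo
      · linear_combination h - (B * (x + y + z)) * htwo
      · linear_combination h + (B * y + (B + 1) * (x + z)) * htwo
      · linear_combination h - (B * y + (B + 1) * (x + z)) * htwo
    · have hl1 : (l : E) = 1 := by
        obtain ⟨k, hk⟩ := hl
        rw [hk]; push_cast; rw [htwo]; ring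
      rw [hl1, or_comm]
      refine or_congr ⟨fun h => ?_, fun h => ?_⟩ ⟨fun h => ?_, fun h => ?_⟩
      · linear_combination h + (x + (B + 1) * (x + y + z)) * htwo
      · linear_combination h - (x + (B + 1) * (x + y + z)) * htwo
      · linear_combination h + (x + B * (x + y + z) + z) * htwo
      · linear_combination h - (x + B * (x + y + z) + z) * htwo
  -- each coset is the orbit of any of its elements under multiplication by `q`
  have horbD : ∀ j₀ ∈ D, ∀ j, j ∈ D ↔ ∃ t : ℕ, j = (q : ZMod n) ^ t * j₀ := by
    intro j₀ hj₀ j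
    constructor
    · intro hj
      obtain ⟨k, hk, rfl⟩ := exists_mul_eq (hne hj₀) (fun k => (htab j₀ k).1 hj₀) rfl hj
      obtain ⟨t, rfl⟩ := (hD k).mp hk
      exact ⟨t, mul_comm _ _⟩
    · rintro ⟨t, rfl⟩
      exact (htab _ _).1 ((hD _).mpr ⟨t, rfl⟩) hj₀
  have horbD' : ∀ j₀ ∈ D', ∀ j, j ∈ D' ↔ ∃ t : ℕ, j = (q : ZMod n) ^ t * j₀ := by
    intro j₀ hj₀ j
    constructor
    · intro hj
      obtain ⟨k, hk, rfl⟩ := exists_mul_eq (hne' hj₀) (fun k => (htab j₀ k).2.2.1 hj₀) hc hj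
      obtain ⟨t, rfl⟩ := (hD k).mp hk
      exact ⟨t, mul_comm _ _⟩
    · rintro ⟨t, rfl⟩
      exact (htab _ _).2.1 ((hD _).mpr ⟨t, rfl⟩) hj₀
  have hstabD : ∀ f : ZMod n → E, ∑ j ∈ D, f (q * j) = ∑ j ∈ D, f j :=
    sum_mul_left hQ (fun j => (htab _ j).1 hQD) rfl
  have hstabD' : ∀ f : ZMod n → E, ∑ j ∈ D', f (q * j) = ∑ j ∈ D', f j :=
    sum_mul_left hQ (fun j => (htab _ j).2.1 hQD) rfl
  have hcover : ∀ j, j = 0 ∨ j ∈ D ∨ j ∈ D' := fun j => by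
    rw [hD']; tauto
  -- on each coset the transform vanishes identically or nowhere
  have hzero : ∀ C : Finset (ZMod n),
      (∀ j₀ ∈ C, ∀ j, j ∈ C ↔ ∃ t : ℕ, j = (q : ZMod n) ^ t * j₀) →
      ∀ j₀ ∈ C, fourierSum ψ a j₀ = 0 → ∀ j ∈ C, fourierSum ψ a j = 0 := by
    intro C horb j₀ hj₀ h j hj
    obtain ⟨t, rfl⟩ := (horb j₀ hj₀ j).mp hj
    exact fourierSum_zero_of_orbit hσ ha hq0 h t
  have hnotboth : (∀ j ∈ D, fourierSum ψ a j = 0) → (∀ j ∈ D', fourierSum ψ a j = 0) → False := by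
    intro h1 h2
    have h : ∀ k, (n : E) * a k = fourierSum ψ a 0 := by
      intro k
      rw [← fourierSum_inversion hψ a k, sum_univ_split h0D hD',
        Finset.sum_eq_zero fun j hj => by rw [h1 j hj, zero_mul],
        Finset.sum_eq_zero fun j hj => by rw [h2 j hj, zero_mul]]
      simp
    exact ha01 (mul_left_cancel₀ hnE ((h 1).trans (h 0).symm))
  have hhalf : ∀ C C' : Finset (ZMod n), C.card = (n - 1) / 2 → C'.card = (n - 1) / 2 →
      (∀ j ∈ C', j ≠ 0 ∧ j ∉ C) → (∀ j, j = 0 ∨ j ∈ C ∨ j ∈ C') →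
      (∀ j₀ ∈ C', ∀ j, j ∈ C' ↔ ∃ t : ℕ, j = (q : ZMod n) ^ t * j₀) →
      (∀ j ∈ C, fourierSum ψ a j = 0) → (∀ j ∈ C', fourierSum ψ a j ≠ 0) →
      IsKNormal q n ((n - 1) / 2) α ∧
        ∃ m₂ : Polynomial Fq, m₂.Monic ∧ Irreducible m₂ ∧ m₂.natDegree = (n - 1) / 2 ∧
          m₂ ∣ (Polynomial.X ^ n - 1) ∧ IsMinPoly q α ((Polynomial.X - 1) * m₂) := by
    intro C C' hC hC' hdisj hcov horb hz hnz
    have hcase : ∀ j, fourierSum ψ a j ≠ 0 ↔ j = 0 ∨ j ∈ C' := by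
      intro j
      constructor
      · intro h
        rcases hcov j with h' | h' | h'
        · exact Or.inl h'
        · exact absurd (hz j h') h
        · exact Or.inr h'
      · rintro (rfl | h)
        · exact hF0ne
        · exact hnz j h
    refine ⟨?_, ?_⟩
    · rw [← hC]
      refine isKNormal_card_s17 hψ hnE hroots haα fun j => ⟨hz j, fun h => ?_⟩
      rcases hcov j with rfl | h' | h'
      · exact absurd h hF0ne
      · exact h'
      · exact absurd h (hnz j h')
    · have hpos : 0 < C'.card := by rw [hC']; lia
      obtain ⟨j₀, hj₀⟩ := Finset.card_pos.mp hpos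
      have : Fact (Nat.Prime 2) := ⟨Nat.prime_two⟩
      obtain ⟨m₂, h1, h2, h3, h4, h5⟩ := exists_isMinPoly_of_orbit (Fq := Fq) h2n hq hψ hnE hcard
        hσ ha haα (hdisj j₀ hj₀).1 (fun j => by rw [hcase, horb j₀ hj₀])
      exact ⟨m₂, h1, h2, h3.trans horder, h4, h5⟩
  rw [← not_or, hcond]
  refine ⟨fun h => ?_, fun h => ?_⟩
  · rw [not_or] at h
    have hF : ∀ j, fourierSum ψ a j ≠ 0 := by
      intro j hj
      rcases hcover j with rfl | hjC | hjC
      · exact hF0ne hj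
      · exact h.1 (Finset.sum_eq_zero (hzero D horbD j hjC hj))
      · exact h.2 (Finset.sum_eq_zero (hzero D' horbD' j hjC hj))
    refine ⟨?_, isMinPoly_of_forall_ne_zero hψ hnE hroots hcard hσ ha haα hF⟩
    exact isKNormal_card_s17 hψ hnE hroots haα (Z := ∅) fun j => by simp [hF j]
  · rcases h with h | h
    · have hz := fun j hj => fourierSum_zero_of_sum hψ hnE hσ ha hq0 hstabD h (j := j) hj
      exact hhalf D D' hcD hcD' (fun j => (hD' j).mp) hcover horbD' hz
        fun j hj hj0 => hnotboth hz (hzero D' horbD' j hj hj0)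
    · have hz := fun j hj => fourierSum_zero_of_sum hψ hnE hσ ha hq0 hstabD' h (j := j) hj
      exact hhalf D' D hcD' hcD (fun j hj => ⟨hne hj, fun hj' => ((hD' j).mp hj').2 hj⟩)
        (fun j => (hcover j).imp_right Or.symm) horbD hz
        fun j hj hj0 => hnotboth (hzero D horbD j hj hj0) hz
end

section
/- Let p and n be distinct primes with n ≥ 3, q = p^m, let f be the multiplicative order of q modulo n, write n − 1 = e·f, let g be a generator of (Z/nZ)^× with q ≡ g^e (mod n), let C = ⟨q⟩ ⊆ (Z/nZ)^× and C_λ = g^λ·C for 0 ≤ λ ≤ e−1. Let ζ be a primitive n-th root of unity in an extension field E of F_q and set ε_λ = Σ_{a∈C_λ} ζ^a ∈ E for 0 ≤ λ ≤ e−1 (the Gauss periods of order e, with indices read modulo e). Then for every j with 0 ≤ j ≤ e−1: Σ_{λ=0}^{e−1} ε_λ · ε_{λ+j} equals (n − f)·1_E if −1 mod n lies in C_j, and equals (−f)·1_E otherwise, where integers act on E via the canonical ring map ℤ → E. -/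
/-!
Write `ψ a = ζ ^ a`, a primitive additive character of `ZMod n`. For `a ∈ C_λ`, multiplication by
`a` maps `C_j` bijectively onto `C_{λ+j}`, so
`ε_λ ε_{λ+j} = ∑_{a ∈ C_λ} ∑_{c ∈ C_j} ψ (a (1 + c))`. The cosets `C_λ`, `λ < e`, partition the
nonzero residues; summing over `λ` therefore gives `∑_{c ∈ C_j} ∑_{a ≠ 0} ψ (a (1 + c))`. By
orthogonality the inner sum is `n - 1` when `c = -1` and `-1` otherwise, and `C_j` has `f` elements.
-/

open Polynomial

theorem stmt_18 (p m n q f e : ℕ) (hp : p.Prime) (hnp : n.Prime) (hne : n ≠ p)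
    (hn3 : 3 ≤ n) (hm : 0 < m) (hq : q = p ^ m)
    {Fq E : Type*} [Field Fq] [Fintype Fq] [Field E] [Algebra Fq E]
    (hcard : Fintype.card Fq = q)
    -- f is the multiplicative order of q modulo n and n - 1 = e·f
    (hf : orderOf (q : ZMod n) = f) (hef : n - 1 = e * f)
    -- g generates (ZMod n)ˣ and q ≡ g^e (mod n)
    (g : (ZMod n)ˣ) (hg : ∀ x : (ZMod n)ˣ, x ∈ Subgroup.zpowers g)
    (hge : ((g : ZMod n)) ^ e = (q : ZMod n))
    -- the cosets C_λ = g^λ·⟨q⟩ of C = ⟨q⟩ in (ZMod n)ˣ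
    (C : ℕ → Finset (ZMod n))
    (hC : ∀ lam : ℕ, ∀ x : ZMod n,
      x ∈ C lam ↔ ∃ t : ℕ, x = (g : ZMod n) ^ lam * (q : ZMod n) ^ t)
    -- ζ a primitive n-th root of unity in an extension E of F_q
    (ζ : E) (hζ : IsPrimitiveRoot ζ n) :
    ∀ j : ℕ, j ≤ e - 1 →
      (∑ lam ∈ Finset.range e,
          (∑ a ∈ C lam, ζ ^ a.val) * (∑ a ∈ C (lam + j), ζ ^ a.val)) =
        if (-1 : ZMod n) ∈ C j then (((n : ℤ) - (f : ℤ) : ℤ) : E)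
        else ((-(f : ℤ) : ℤ) : E) := by
  intro j _
  have : Fact n.Prime := ⟨hnp⟩
  have hef0 : 0 < e * f := by omega
  have he : 0 < e := Nat.pos_of_mul_pos_right hef0
  have hg0 : (g : ZMod n) ≠ 0 := g.ne_zero
  have hq0 : (q : ZMod n) ≠ 0 := by rw [← hge]; exact pow_ne_zero _ hg0
  have hgord : orderOf g = e * f := by
    rw [orderOf_eq_card_of_forall_mem_zpowers hg, Nat.card_eq_fintype_card,
      ZMod.card_units_eq_totient, Nat.totient_prime hnp, hef]
  have hCimg : ∀ l, C l = (Finset.range f).image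
      (fun t => (g : ZMod n) ^ l * (q : ZMod n) ^ t) := by
    intro l
    ext x
    rw [hC, Finset.mem_image]
    constructor
    · rintro ⟨t, rfl⟩
      refine ⟨t % f, Finset.mem_range.2 (Nat.mod_lt _ (Nat.pos_of_mul_pos_left hef0)), ?_⟩
      rw [← hf, pow_mod_orderOf]
    · rintro ⟨t, -, rfl⟩
      exact ⟨t, rfl⟩
  have hCcard : ∀ l, (C l).card = f := by
    intro l
    rw [hCimg, Finset.card_image_of_injOn, Finset.card_range]
    intro s hs t ht hst
    have h := mul_left_cancel₀ (pow_ne_zero l hg0) hst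
    rw [Finset.coe_range, Set.mem_Iio, ← hf] at hs ht
    exact pow_injOn_Iio_orderOf hs ht h
  have hCne : ∀ l, ∀ a ∈ C l, a ≠ 0 := by
    intro l a ha
    obtain ⟨t, rfl⟩ := (hC l a).1 ha
    exact mul_ne_zero (pow_ne_zero _ hg0) (pow_ne_zero _ hq0)
  have hshift : ∀ l, ∀ a ∈ C l, (C j).image (fun c => a * c) = C (l + j) := by
    intro l a ha
    have hinj : Function.Injective (fun c : ZMod n => a * c) :=
      mul_right_injective₀ (hCne l a ha)
    -- Inclusion together with equal cardinality `f` avoids inverting powers of `q`.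
    apply Finset.eq_of_subset_of_card_le
    · intro x hx
      obtain ⟨c, hc, rfl⟩ := Finset.mem_image.1 hx
      obtain ⟨t, rfl⟩ := (hC l a).1 ha
      obtain ⟨s, rfl⟩ := (hC j c).1 hc
      exact (hC _ _).2 ⟨t + s, by ring⟩
    · rw [Finset.card_image_of_injective _ hinj, hCcard, hCcard]
  have hdisj : ((Finset.range e : Finset ℕ) : Set ℕ).PairwiseDisjoint C := by
    intro l hl k hk hlk
    refine Finset.disjoint_left.2 fun x hx hx' => hlk ?_
    obtain ⟨t, rfl⟩ := (hC l x).1 hx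
    obtain ⟨s, hs⟩ := (hC k _).1 hx'
    rw [← hge, ← pow_mul, ← pow_mul, ← pow_add, ← pow_add] at hs
    have hs' : g ^ (l + e * t) = g ^ (k + e * s) := Units.ext (by simpa using hs)
    -- Equal powers of `g` have exponents congruent modulo `e * f`, hence modulo `e`.
    have h := (pow_eq_pow_iff_modEq.1 hs')
    rw [hgord] at h
    have h2 : (l + e * t) % e = (k + e * s) % e := h.of_mul_right f
    rw [Finset.coe_range, Set.mem_Iio] at hl hk
    rwa [Nat.add_mul_mod_self_left, Nat.add_mul_mod_self_left, Nat.mod_eq_of_lt hl,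
      Nat.mod_eq_of_lt hk] at h2
  have hunion : (Finset.range e).biUnion C = Finset.univ.erase 0 := by
    ext x
    rw [Finset.mem_biUnion, Finset.mem_erase]
    constructor
    · rintro ⟨l, -, hx⟩
      exact ⟨hCne l x hx, Finset.mem_univ _⟩
    · rintro ⟨hx, -⟩
      obtain ⟨k, hk⟩ := mem_powers_iff_mem_zpowers.2 (hg (Units.mk0 x hx))
      have hk' : (g : ZMod n) ^ k = x := by simpa using congrArg Units.val hk
      refine ⟨k % e, Finset.mem_range.2 (Nat.mod_lt _ he), (hC _ _).2 ⟨k / e, ?_⟩⟩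
      rw [← hge, ← pow_mul, ← pow_add, Nat.mod_add_div, hk']
  let ψ : AddChar (ZMod n) E := AddChar.zmodChar n hζ.pow_eq_one
  have hψ : ∀ a : ZMod n, ζ ^ a.val = ψ a := fun a =>
    (AddChar.zmodChar_apply hζ.pow_eq_one a).symm
  have hprim : ψ.IsPrimitive := AddChar.zmodChar_primitive_of_primitive_root n hζ
  have horth : ∀ b : ZMod n, ∑ a ∈ Finset.univ.erase 0, ψ (a * b)
      = (if b = 0 then (n : E) else 0) - 1 := by
    intro b
    have h := AddChar.sum_mulShift b hprim
    rw [← Finset.add_sum_erase _ _ (Finset.mem_univ (0 : ZMod n))] at h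
    rw [zero_mul, AddChar.map_zero_eq_one, ZMod.card] at h
    rw [eq_sub_iff_add_eq, add_comm, h]
    split_ifs <;> simp
  simp only [hψ]
  have hprod : ∀ l, (∑ a ∈ C l, ψ a) * (∑ b ∈ C (l + j), ψ b)
      = ∑ a ∈ C l, ∑ c ∈ C j, ψ (a * (1 + c)) := by
    intro l
    rw [Finset.sum_mul]
    refine Finset.sum_congr rfl fun a ha => ?_
    rw [← hshift l a ha,
      Finset.sum_image fun x _ y _ h => mul_left_cancel₀ (hCne l a ha) h, Finset.mul_sum]
    refine Finset.sum_congr rfl fun c _ => ?_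
    rw [mul_add, mul_one, AddChar.map_add_eq_mul]
  have hneg : ∀ c : ZMod n, 1 + c = 0 ↔ c = -1 := fun c => by
    rw [add_comm, add_eq_zero_iff_eq_neg]
  rw [Finset.sum_congr rfl fun l _ => hprod l, ← Finset.sum_biUnion hdisj, hunion,
    Finset.sum_comm, Finset.sum_congr rfl fun c _ => horth (1 + c), Finset.sum_sub_distrib]
  simp only [hneg, Finset.sum_ite_eq', Finset.sum_const, hCcard, nsmul_eq_mul, mul_one]
  split_ifs <;> simp
end

section
/- Let p and n be distinct primes with n ≥ 3, q = p^m, Q = q^n. Let f be the multiplicative order of q modulo n, write n − 1 = e·f, let g be a generator of (Z/nZ)^× with q ≡ g^e (mod n), and let C_λ = g^λ·⟨q⟩ for 0 ≤ λ ≤ e−1. Let ζ be a primitive n-th root of unity in an extension field E of F_Q, set ε_λ = Σ_{a∈C_λ} ζ^a (indices mod e), and put c = 0 if f is even and c = e/2 if f is odd. For α ∈ F_Q^×, let S = { i : 0 ≤ i ≤ e−1 and Σ_{λ=0}^{e−1} ε_{λ+i+c} · (Σ_{a∈C_λ} α^{q^a}) ≠ −f·α in E }. Then: (I) if α ∈ F_q^×,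 then α is (n−1)-normal for F_Q/F_q with conventional minimal polynomial m_α(X) = X − 1; (II) if α ∉ F_q and Tr(α) = 0, then α is k-normal for F_Q/F_q with k = f·(e − |S|) + 1; (III) if α ∉ F_q and Tr(α) ≠ 0, then α is k-normal for F_Q/F_q with k = f·(e − |S|). -/
/-!
Since `n` is prime to `p`, the polynomial `Xⁿ - 1` has the `n` distinct roots `ζ^k` in `E`, and
`α` is `k`-normal exactly when `k` of them are roots of `g_α` (`isKNormal_card_roots`). Up to a
nonzero factor, `g_α(ζ^(-k))` is the discrete Fourier transform `F(k) = ∑ₐ α^(q^a) ζ^(ak)` over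
`ℤ/n`, so the zeros of `F` have to be counted. At `k = 0` the value is the trace of `α`.

Raising to the `q`-th power gives `F(k)^q = ζ^(-qk) F(qk)`, so the zeros of `F` other than `0` form
a union of cosets `C_μ` (`dft_mul_eq_zero`). Expanding `∑_{j ∈ C_μ} F(j)` gives
`f α + ∑_λ ε_(λ+μ) ∑_{a ∈ C_λ} α^(q^a)` (`sum_dft_coset`), so `i ∉ S` means that this sum vanishes
for `μ = i + c`. The sum vanishes only if `F` vanishes on all of `C_μ` (`dft_eq_zero_of_sum`): its
coefficients are fixed by Frobenius, so all its conjugates vanish too, and their Fourier transform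
recovers `n F(k)` for `k ∈ C_μ`. Therefore `F` vanishes on exactly `e - |S|` of the `e` cosets, each
of which has `f` elements.

For `α ∈ F_q` the transform is `α ∑ₐ ζ^(ak)`, which vanishes exactly for `k ≠ 0`.
-/

open Polynomial

section KNormal

open scoped Classical

/-! ### Roots of the gcd -/

/-- As `n ≠ 0` in `E`, the polynomial `Xⁿ - 1` is separable and splits over `E`, so the degree of
the gcd counts the powers of `ζ` that are roots of `g_α`. -/
theorem isKNormal_card_roots {K E : Type*} [Field K] [Field E] [Algebra K E] (q n : ℕ) [NeZero n]
    (hn : (n : E) ≠ 0) {ζ : E} (hζ : IsPrimitiveRoot ζ n) (α : K) :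
    IsKNormal q n (Finset.univ.filter fun k : ZMod n =>
      ((gpoly q n α).map (algebraMap K E)).eval (ζ ^ k.val) = 0).card α := by
  unfold IsKNormal
  generalize Classical.decEq K[X] = inst
  set G := (gpoly q n α).map (algebraMap K E) with hG
  set d := EuclideanDomain.gcd (gpoly q n α) (X ^ n - 1) with hd
  have hP0 : (X ^ n - 1 : E[X]) ≠ 0 := X_pow_sub_C_ne_zero (NeZero.pos n) 1
  have hmapP : (X ^ n - 1 : K[X]).map (algebraMap K E) = X ^ n - 1 := by simp
  have hdvd : d.map (algebraMap K E) ∣ X ^ n - 1 := by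
    rw [← hmapP]
    exact Polynomial.map_dvd _ (EuclideanDomain.gcd_dvd_right _ _)
  have hdvdG : d.map (algebraMap K E) ∣ G :=
    Polynomial.map_dvd _ (EuclideanDomain.gcd_dvd_left _ _)
  have hd0 : d.map (algebraMap K E) ≠ 0 := ne_zero_of_dvd_ne_zero hP0 hdvd
  have hsplit : (d.map (algebraMap K E)).Splits :=
    Splits.of_dvd (by simpa using X_pow_sub_one_splits hζ) hP0 hdvd
  have hsep : (d.map (algebraMap K E)).Separable :=
    (X_pow_sub_one_separable_iff.2 hn).of_dvd hdvd
  have hroot : ∀ x : E, (d.map (algebraMap K E)).eval x = 0 ↔ G.eval x = 0 ∧ x ^ n = 1 := by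
    intro x
    constructor
    · intro h
      refine ⟨eval_eq_zero_of_dvd_of_eval_eq_zero hdvdG h, ?_⟩
      have := eval_eq_zero_of_dvd_of_eval_eq_zero hdvd h
      simpa [sub_eq_zero] using this
    · rintro ⟨h1, h2⟩
      rw [hd, EuclideanDomain.gcd_eq_gcd_ab, Polynomial.map_add, Polynomial.map_mul,
        Polynomial.map_mul, hmapP, eval_add, eval_mul, eval_mul, ← hG, h1]
      simp [h2]
  rw [← natDegree_map (algebraMap K E), hsplit.natDegree_eq_card_roots,
    ← Multiset.toFinset_card_of_nodup (nodup_roots hsep)]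
  symm
  refine Finset.card_bij (fun k _ => ζ ^ k.val) ?_ ?_ ?_
  · intro k hk
    rw [Multiset.mem_toFinset, mem_roots hd0, IsRoot.def, hroot]
    refine ⟨(Finset.mem_filter.1 hk).2, ?_⟩
    rw [← pow_mul, mul_comm, pow_mul, hζ.pow_eq_one, one_pow]
  · intro a _ b _ h
    exact ZMod.val_injective n (hζ.pow_inj (ZMod.val_lt a) (ZMod.val_lt b) h)
  · intro x hx
    rw [Multiset.mem_toFinset, mem_roots hd0, IsRoot.def, hroot] at hx
    obtain ⟨i, hi, rfl⟩ := hζ.eq_pow_of_pow_eq_one hx.2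
    refine ⟨(i : ZMod n), ?_, ?_⟩
    · simp only [Finset.mem_filter, Finset.mem_univ, true_and, ZMod.val_natCast,
        Nat.mod_eq_of_lt hi]
      exact hx.1
    · simp only [ZMod.val_natCast, Nat.mod_eq_of_lt hi]

theorem sum_range_eq_sum_zmod {M : Type*} [AddCommMonoid M] (n : ℕ) [NeZero n] (h : ℕ → M) :
    ∑ i ∈ Finset.range n, h i = ∑ a : ZMod n, h a.val := by
  refine Finset.sum_bij' (fun i _ => (i : ZMod n)) (fun a _ => a.val) ?_ ?_ ?_ ?_ ?_
  · simp
  · intro a _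
    exact Finset.mem_range.2 (ZMod.val_lt a)
  · intro i hi
    exact ZMod.val_cast_of_lt (Finset.mem_range.1 hi)
  · simp
  · intro i hi
    rw [ZMod.val_cast_of_lt (Finset.mem_range.1 hi)]

/-! ### Fourier transform and Frobenius -/

/-- The discrete Fourier transform `k ↦ ∑ₐ A(a) ψ(ak)` of a function `A` on `ℤ/n`; the lemmas below
take `A(a) = α^(q^a)` and `ψ(a) = ζ^a`. -/
def dft {E : Type*} [Field E] {n : ℕ} [NeZero n] (A : ZMod n → E) (ψ : AddChar (ZMod n) E)
    (k : ZMod n) : E :=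
  ∑ a, A a * ψ (a * k)

section Frobenius

variable {E : Type*} [Field E] {n : ℕ} [NeZero n] (φ : E →+* E) (A : ZMod n → E)
  (ψ : AddChar (ZMod n) E) (r : ZMod n)

/-- The Fourier transform turns the translation by `b` into the multiplication by a character. -/
theorem sum_shift_mul_char (b k : ZMod n) :
    ∑ a, A (a + b) * ψ (a * k) = ψ (-(b * k)) * dft A ψ k := by
  rw [dft, Finset.mul_sum,
    ← Equiv.sum_comp (Equiv.addRight b) fun a => ψ (-(b * k)) * (A a * ψ (a * k))]
  refine Finset.sum_congr rfl fun a _ => ?_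
  rw [Equiv.coe_addRight, add_mul, AddChar.map_add_eq_mul, AddChar.map_neg_eq_inv]
  have : ψ (b * k) ≠ 0 := (AddChar.val_isUnit ψ _).ne_zero
  field_simp

/-- Frobenius relates the values at `k` and at `rk` (with `r = q` in the application). Hence the zero
set of the transform is stable under multiplication by `r`. -/
theorem map_dft (hA : ∀ a, φ (A a) = A (a + 1)) (hψ : ∀ a, φ (ψ a) = ψ (r * a)) (k : ZMod n) :
    φ (dft A ψ k) = ψ (-(r * k)) * dft A ψ (r * k) := by
  have := sum_shift_mul_char A ψ 1 (r * k)
  rw [one_mul] at this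
  rw [← this, dft, map_sum]
  refine Finset.sum_congr rfl fun a _ => ?_
  rw [map_mul, hA, hψ]
  ring_nf

theorem dft_mul_eq_zero (hA : ∀ a, φ (A a) = A (a + 1)) (hψ : ∀ a, φ (ψ a) = ψ (r * a))
    {k : ZMod n} (h : dft A ψ k = 0) (t : ℕ) : dft A ψ (k * r ^ t) = 0 := by
  induction t with
  | zero => simpa using h
  | succ t ih =>
    have := map_dft φ A ψ r hA hψ (k * r ^ t)
    rw [ih, map_zero, eq_comm, mul_eq_zero] at this
    rw [pow_succ, mul_comm r] at *
    convert this.resolve_left (AddChar.val_isUnit ψ _).ne_zero using 2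
    ring

/-- The sum over `D` is, up to the factor `n`, the projection of `α` attached to the Frobenius
orbits in `D`. As its coefficients `∑_{j ∈ D} ψ(aj)` are fixed by `φ`, all its `φ`-iterates are
explicit, and their Fourier transform at `k ∈ D` is `n` times that of `A`. -/
theorem dft_eq_zero_of_sum (hA : ∀ a, φ (A a) = A (a + 1)) (hψ : ∀ a, φ (ψ a) = ψ (r * a))
    (hprim : ψ.IsPrimitive) (hn : (n : E) ≠ 0) (D : Finset (ZMod n))
    (hD : D.image (r * ·) = D) (hr : Function.Injective (fun x : ZMod n => r * x))
    (h : ∑ j ∈ D, dft A ψ j = 0) {k : ZMod n} (hk : k ∈ D) : dft A ψ k = 0 := by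
  set η : ZMod n → E := fun a => ∑ j ∈ D, ψ (a * j) with hη
  have hφη : ∀ a, φ (η a) = η a := by
    intro a
    simp only [hη, map_sum, hψ]
    conv_rhs => rw [← hD]
    rw [Finset.sum_image hr.injOn]
    exact Finset.sum_congr rfl fun j _ => by ring_nf
  have hY : ∑ a, A a * η a = 0 := by
    rw [← h]
    simp only [hη, dft, Finset.mul_sum]
    exact Finset.sum_comm
  have hYt : ∀ t : ℕ, ∑ a, A (a + t) * η a = 0 := by
    intro t
    induction t with
    | zero => simpa using hY
    | succ t ih =>
      have := congrArg φ ih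
      rw [map_sum, map_zero] at this
      rw [← this]
      refine Finset.sum_congr rfl fun a _ => ?_
      rw [map_mul, hA, hφη]
      push_cast
      ring_nf
  have hYb : ∀ b : ZMod n, ∑ a, A (a + b) * η a = 0 := by
    intro b
    simpa using hYt b.val
  have key : ∑ b, (∑ a, A (a + b) * η a) * ψ (b * k) = (n : E) * dft A ψ k := by
    calc ∑ b, (∑ a, A (a + b) * η a) * ψ (b * k)
        = ∑ a, η a * ∑ b, A (b + a) * ψ (b * k) := by
          simp only [Finset.sum_mul, Finset.mul_sum]
          rw [Finset.sum_comm]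
          refine Finset.sum_congr rfl fun a _ => Finset.sum_congr rfl fun b _ => ?_
          rw [add_comm a b]; ring
      _ = (∑ j ∈ D, ∑ a, ψ (a * (j - k))) * dft A ψ k := by
          simp only [sum_shift_mul_char, hη]
          rw [Finset.sum_comm, Finset.sum_mul]
          refine Finset.sum_congr rfl fun a _ => ?_
          rw [← mul_assoc, Finset.sum_mul]
          congr 1
          refine Finset.sum_congr rfl fun j _ => ?_
          rw [← AddChar.map_add_eq_mul]
          ring_nf
      _ = (n : E) * dft A ψ k := by
          congr 1
          rw [Finset.sum_congr rfl fun j _ => AddChar.sum_mulShift (j - k) hprim]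
          simp [sub_eq_zero, hk]
  simp only [hYb, zero_mul, Finset.sum_const_zero] at key
  exact (mul_eq_zero.1 key.symm).resolve_left hn

end Frobenius

/-- The index `-k` appears because `g_α` lists the conjugates of `α` in decreasing order of degree:
`g_α(ζ^k) = ζ^(-k) ∑ᵢ α^(q^i) ζ^(-ik)`. -/
theorem eval_gpoly_eq_zero_iff {K E : Type*} [Field K] [Field E] [Algebra K E] (q n : ℕ) [NeZero n]
    {ζ : E} (hζ : ζ ^ n = 1) (α : K) (k : ZMod n) :
    ((gpoly q n α).map (algebraMap K E)).eval (ζ ^ k.val) = 0 ↔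
      dft (fun a => algebraMap K E α ^ q ^ a.val) (AddChar.zmodChar n hζ) (-k) = 0 := by
  have : ((gpoly q n α).map (algebraMap K E)).eval (ζ ^ k.val) =
      AddChar.zmodChar n hζ (-k) *
        dft (fun a => algebraMap K E α ^ q ^ a.val) (AddChar.zmodChar n hζ) (-k) := by
    rw [gpoly, Polynomial.map_sum, eval_finsetSum, sum_range_eq_sum_zmod, dft, Finset.mul_sum]
    refine Finset.sum_congr rfl fun a _ => ?_
    simp only [Polynomial.map_mul, map_C, Polynomial.map_pow, map_X, eval_mul, eval_C, eval_pow,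
      eval_X, map_pow]
    rw [← AddChar.zmodChar_apply hζ, ← AddChar.map_nsmul_eq_pow, mul_left_comm,
      ← AddChar.map_add_eq_mul]
    congr 2
    have hlt := ZMod.val_lt a
    rw [nsmul_eq_mul, Nat.cast_sub (by omega), Nat.cast_sub (by omega)]
    simp
    ring
  rw [this, mul_eq_zero, or_iff_right (AddChar.val_isUnit _ _).ne_zero]

/-! ### Cosets of `⟨q⟩` in `(ℤ/n)ˣ` -/

section Cosets

variable {n q f e : ℕ} [Fact n.Prime] {g : (ZMod n)ˣ} {C : ℕ → Finset (ZMod n)}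

theorem pow_eq_iff_modEq (hef : n - 1 = e * f) (hg : ∀ x : (ZMod n)ˣ, x ∈ Subgroup.zpowers g)
    (s t : ℕ) : (g : ZMod n) ^ s = (g : ZMod n) ^ t ↔ s ≡ t [MOD e * f] := by
  rw [← Units.val_pow_eq_pow_val, ← Units.val_pow_eq_pow_val, Units.val_inj, pow_eq_pow_iff_modEq,
    orderOf_eq_card_of_forall_mem_zpowers hg, Nat.card_eq_fintype_card, ZMod.card_units, hef]

theorem coset_eq_image (hef : n - 1 = e * f) (hf : 0 < f)
    (hg : ∀ x : (ZMod n)ˣ, x ∈ Subgroup.zpowers g)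
    (hge : (g : ZMod n) ^ e = (q : ZMod n))
    (hC : ∀ lam : ℕ, ∀ x : ZMod n,
      x ∈ C lam ↔ ∃ t : ℕ, x = (g : ZMod n) ^ lam * (q : ZMod n) ^ t) (lam : ℕ) :
    C lam = (Finset.range f).image fun t => (g : ZMod n) ^ (lam + e * t) := by
  ext x
  rw [hC, Finset.mem_image]
  constructor
  · rintro ⟨t, rfl⟩
    refine ⟨t % f, Finset.mem_range.2 (Nat.mod_lt _ hf), ?_⟩
    rw [← hge, ← pow_mul, ← pow_add, pow_eq_iff_modEq hef hg]
    exact ((Nat.mod_modEq t f).mul_left' e).add_left _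
  · rintro ⟨t, _, rfl⟩
    exact ⟨t, by rw [← hge, ← pow_mul, ← pow_add]⟩

theorem card_coset (hef : n - 1 = e * f) (he : 0 < e) (hf : 0 < f)
    (hg : ∀ x : (ZMod n)ˣ, x ∈ Subgroup.zpowers g)
    (hge : (g : ZMod n) ^ e = (q : ZMod n))
    (hC : ∀ lam : ℕ, ∀ x : ZMod n,
      x ∈ C lam ↔ ∃ t : ℕ, x = (g : ZMod n) ^ lam * (q : ZMod n) ^ t) (lam : ℕ) :
    (C lam).card = f := by
  rw [coset_eq_image hef hf hg hge hC, Finset.card_image_of_injOn, Finset.card_range]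
  intro s hs t ht h
  simp only [pow_eq_iff_modEq hef hg] at h
  have h2 := Nat.ModEq.mul_left_cancel' he.ne' (Nat.ModEq.add_left_cancel' _ h)
  exact h2.eq_of_lt_of_lt (Finset.mem_range.1 hs) (Finset.mem_range.1 ht)

theorem coset_disjoint (hef : n - 1 = e * f)
    (hg : ∀ x : (ZMod n)ˣ, x ∈ Subgroup.zpowers g)
    (hge : (g : ZMod n) ^ e = (q : ZMod n))
    (hC : ∀ lam : ℕ, ∀ x : ZMod n,
      x ∈ C lam ↔ ∃ t : ℕ, x = (g : ZMod n) ^ lam * (q : ZMod n) ^ t) (c : ℕ) :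
    Set.PairwiseDisjoint (Finset.range e : Set ℕ) fun i => C (i + c) := by
  intro i hi j hj hij
  refine Finset.disjoint_left.2 fun x hx hy => hij ?_
  obtain ⟨s, rfl⟩ := (hC _ _).1 hx
  obtain ⟨t, h⟩ := (hC _ _).1 hy
  rw [← hge, ← pow_mul, ← pow_mul, ← pow_add, ← pow_add, pow_eq_iff_modEq hef hg] at h
  have h2 : i + c + e * s ≡ j + c + e * t [MOD e] := h.of_mul_right f
  have h3 : i + c ≡ j + c [MOD e] := by
    simpa [Nat.ModEq, Nat.add_mul_mod_self_left] using h2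
  exact (Nat.ModEq.add_right_cancel' c h3).eq_of_lt_of_lt
    (Finset.mem_range.1 hi) (Finset.mem_range.1 hj)

/-- Any `e` consecutive cosets exhaust the nonzero residues; with `coset_disjoint` this is why
the shift `c` has no effect on the count. -/
theorem biUnion_coset (he : 0 < e)
    (hg : ∀ x : (ZMod n)ˣ, x ∈ Subgroup.zpowers g)
    (hge : (g : ZMod n) ^ e = (q : ZMod n))
    (hC : ∀ lam : ℕ, ∀ x : ZMod n,
      x ∈ C lam ↔ ∃ t : ℕ, x = (g : ZMod n) ^ lam * (q : ZMod n) ^ t) (c : ℕ) :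
    (Finset.range e).biUnion (fun i => C (i + c)) = Finset.univ.erase 0 := by
  ext x
  simp only [Finset.mem_biUnion, Finset.mem_range, Finset.mem_erase, Finset.mem_univ, and_true, hC]
  constructor
  · rintro ⟨i, _, t, rfl⟩
    rw [← hge, ← pow_mul, ← pow_add]
    exact pow_ne_zero _ g.ne_zero
  · intro hx
    obtain ⟨u, hu⟩ := mem_powers_iff_mem_zpowers.2 (hg (Units.mk0 x hx * (g ^ c)⁻¹))
    refine ⟨u % e, Nat.mod_lt _ he, u / e, ?_⟩
    have hx' : x = ((g ^ u * g ^ c : (ZMod n)ˣ) : ZMod n) := by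
      have : g ^ u = Units.mk0 x hx * (g ^ c)⁻¹ := hu
      rw [this, inv_mul_cancel_right, Units.val_mk0]
    rw [hx', ← hge, ← pow_mul, ← pow_add, ← pow_add, Units.val_pow_eq_pow_val]
    congr 1
    have := Nat.mod_add_div u e
    omega

theorem image_mul_coset (hef : n - 1 = e * f) (he : 0 < e) (hf : 0 < f)
    (hg : ∀ x : (ZMod n)ˣ, x ∈ Subgroup.zpowers g)
    (hge : (g : ZMod n) ^ e = (q : ZMod n))
    (hC : ∀ lam : ℕ, ∀ x : ZMod n,
      x ∈ C lam ↔ ∃ t : ℕ, x = (g : ZMod n) ^ lam * (q : ZMod n) ^ t)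
    {lam : ℕ} (mu : ℕ) {a : ZMod n} (ha : a ∈ C lam) :
    (C mu).image (a * ·) = C (lam + mu) := by
  have ha0 : a ≠ 0 := by
    obtain ⟨t, rfl⟩ := (hC _ _).1 ha
    rw [← hge, ← pow_mul, ← pow_add]
    exact pow_ne_zero _ g.ne_zero
  refine Finset.eq_of_subset_of_card_le ?_ ?_
  · intro x hx
    obtain ⟨j, hj, rfl⟩ := Finset.mem_image.1 hx
    obtain ⟨t, rfl⟩ := (hC _ _).1 ha
    obtain ⟨s, rfl⟩ := (hC _ _).1 hj
    exact (hC _ _).2 ⟨t + s, by ring⟩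
  · rw [Finset.card_image_of_injective _ (mul_right_injective₀ ha0),
      card_coset hef he hf hg hge hC, card_coset hef he hf hg hge hC]

/-- The sum of the transform over a coset is the Gauss-period expression that defines the set `S`:
the inner sum `∑_{j ∈ C_μ} ψ(aj)` is `f` for `a = 0` and is the period of `C_(λ+μ)` for `a ∈ C_λ`. -/
theorem sum_dft_coset {E : Type*} [Field E] (A : ZMod n → E) (ψ : AddChar (ZMod n) E)
    (hef : n - 1 = e * f) (he : 0 < e) (hf : 0 < f)
    (hg : ∀ x : (ZMod n)ˣ, x ∈ Subgroup.zpowers g)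
    (hge : (g : ZMod n) ^ e = (q : ZMod n))
    (hC : ∀ lam : ℕ, ∀ x : ZMod n,
      x ∈ C lam ↔ ∃ t : ℕ, x = (g : ZMod n) ^ lam * (q : ZMod n) ^ t) (mu : ℕ) :
    ∑ j ∈ C mu, dft A ψ j =
      f * A 0 + ∑ lam ∈ Finset.range e, (∑ b ∈ C (lam + mu), ψ b) * ∑ a ∈ C lam, A a := by
  have h1 : ∑ j ∈ C mu, dft A ψ j = ∑ a, A a * ∑ j ∈ C mu, ψ (a * j) := by
    simp only [dft, Finset.mul_sum]
    exact Finset.sum_comm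
  have h0 := biUnion_coset he hg hge hC 0
  rw [h1, ← Finset.add_sum_erase _ _ (Finset.mem_univ 0), ← h0,
    Finset.sum_biUnion (coset_disjoint hef hg hge hC 0)]
  congr 1
  · simp [card_coset hef he hf hg hge hC, mul_comm]
  · refine Finset.sum_congr rfl fun lam _ => ?_
    rw [Finset.mul_sum]
    refine Finset.sum_congr rfl fun a ha => ?_
    rw [mul_comm]
    congr 1
    have ha0 : a ≠ 0 := by
      have : a ∈ Finset.univ.erase (0 : ZMod n) := by
        rw [← h0]
        exact Finset.mem_biUnion.2 ⟨lam, ‹_›, ha⟩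
      exact (Finset.mem_erase.1 this).1
    rw [← image_mul_coset hef he hf hg hge hC mu ha,
      Finset.sum_image (mul_right_injective₀ ha0).injOn]

end Cosets

/-- On an element of `F_q` all powers of Frobenius are trivial, so `h(φ_q)` acts as the multiplication
by `h(1)`. -/
theorem isMinPoly_X_sub_one {Fq FQ : Type*} [Field Fq] [Fintype Fq] [Field FQ] [Algebra Fq FQ]
    {q : ℕ} (hcard : Fintype.card Fq = q) (a : Fq) (ha : a ≠ 0) :
    IsMinPoly q (algebraMap Fq FQ a) (X - 1 : Fq[X]) := by
  have hpow : ∀ i : ℕ, a ^ q ^ i = a := fun i => by rw [← hcard, FiniteField.pow_card_pow]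
  have hev : ∀ h : Fq[X], lineval q h (algebraMap Fq FQ a) = algebraMap Fq FQ (h.eval 1 * a) := by
    intro h
    rw [lineval, Polynomial.eval_eq_sum, Polynomial.sum, Polynomial.sum, Finset.sum_mul, map_sum]
    refine Finset.sum_congr rfl fun i _ => ?_
    rw [← map_pow, hpow, ← map_mul, one_pow, mul_one]
  refine ⟨monic_X_sub_C 1, by simp [hev], fun h hh => ?_⟩
  rw [hev, map_eq_zero, mul_eq_zero, or_iff_left ha] at hh
  exact dvd_iff_isRoot.2 hh

end KNormal

open scoped Classical in
theorem stmt_19 (p m n q f e : ℕ) (hp : p.Prime) (hnp : n.Prime) (hne : n ≠ p)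
    (hn3 : 3 ≤ n) (hm : 0 < m) (hq : q = p ^ m)
    {Fq FQ E : Type*} [Field Fq] [Fintype Fq] [Field FQ] [Fintype FQ] [Field E]
    [Algebra Fq FQ] [Algebra FQ E] [Algebra Fq E] [IsScalarTower Fq FQ E]
    (hcard : Fintype.card Fq = q) (hcardQ : Fintype.card FQ = q ^ n)
    -- f is the multiplicative order of q modulo n and n - 1 = e·f
    (hf : orderOf (q : ZMod n) = f) (hef : n - 1 = e * f)
    -- g generates (ZMod n)ˣ and q ≡ g^e (mod n)
    (g : (ZMod n)ˣ) (hg : ∀ x : (ZMod n)ˣ, x ∈ Subgroup.zpowers g)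
    (hge : ((g : ZMod n)) ^ e = (q : ZMod n))
    -- the cosets C_λ = g^λ·⟨q⟩ of C = ⟨q⟩ in (ZMod n)ˣ
    (C : ℕ → Finset (ZMod n))
    (hC : ∀ lam : ℕ, ∀ x : ZMod n,
      x ∈ C lam ↔ ∃ t : ℕ, x = (g : ZMod n) ^ lam * (q : ZMod n) ^ t)
    -- ζ a primitive n-th root of unity in an extension E of F_Q
    (ζ : E) (hζ : IsPrimitiveRoot ζ n)
    (α : FQ) (hα : α ≠ 0) :
    let c : ℕ := if Even f then 0 else e / 2
    let S : Finset ℕ := (Finset.range e).filter fun i =>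
      (∑ lam ∈ Finset.range e,
          (∑ a ∈ C (lam + i + c), ζ ^ a.val) *
            algebraMap FQ E (∑ a ∈ C lam, α ^ q ^ a.val)) ≠
        -((f : E) * algebraMap FQ E α)
    (α ∈ Set.range (algebraMap Fq FQ) →
      IsKNormal q n (n - 1) α ∧ IsMinPoly q α (Polynomial.X - 1 : Polynomial Fq)) ∧
    ((α ∉ Set.range (algebraMap Fq FQ) ∧ ∑ i ∈ Finset.range n, α ^ q ^ i = 0) →
      IsKNormal q n (f * (e - S.card) + 1) α) ∧
    ((α ∉ Set.range (algebraMap Fq FQ) ∧ ∑ i ∈ Finset.range n, α ^ q ^ i ≠ 0) →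
      IsKNormal q n (f * (e - S.card)) α) := by
  have := Fact.mk hp
  have := Fact.mk hnp
  intro c S
  have hef0 : 0 < e * f := by omega
  have he : 0 < e := Nat.pos_of_mul_pos_right hef0
  have hf0 : 0 < f := Nat.pos_of_mul_pos_left hef0
  have : CharP FQ p := charP_of_card_eq_prime_pow (f := m * n) (by rw [hcardQ, hq, pow_mul])
  have : CharP E p := charP_of_injective_algebraMap (algebraMap FQ E).injective p
  have hnE : (n : E) ≠ 0 := by
    rw [Ne, CharP.cast_eq_zero_iff E p]
    exact fun h => hne ((Nat.prime_dvd_prime_iff_eq hp hnp).1 h).symm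
  have hq0 : (q : ZMod n) ≠ 0 := by
    rw [← hge]
    exact pow_ne_zero _ g.ne_zero
  set ψ := AddChar.zmodChar n hζ.pow_eq_one with hψ
  have hprim : ψ.IsPrimitive := AddChar.zmodChar_primitive_of_primitive_root n hζ
  set A : ZMod n → E := fun a => algebraMap FQ E α ^ q ^ a.val with hA
  -- `α^(q^i)` depends only on `i` modulo `n`
  have hAcast : ∀ i : ℕ, A i = algebraMap FQ E α ^ q ^ i := by
    intro i
    simp only [hA, ZMod.val_natCast, ← map_pow]
    congr 1
    conv_rhs => rw [← Nat.mod_add_div i n, pow_add, pow_mul q n, mul_comm, pow_mul, ← hcardQ,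
      FiniteField.pow_card_pow]
  set φ : E →+* E := iterateFrobenius E p m with hφ
  have hφq : ∀ x, φ x = x ^ q := fun x => by rw [hφ, iterateFrobenius_def, hq]
  have hφA : ∀ a, φ (A a) = A (a + 1) := by
    intro a
    have := hAcast (a.val + 1)
    push_cast at this
    rw [ZMod.natCast_zmod_val] at this
    rw [this, hφq, ← pow_mul, pow_succ]
  have hφψ : ∀ a, φ (ψ a) = ψ (q * a) := by
    intro a
    rw [hφq, ← AddChar.map_nsmul_eq_pow, nsmul_eq_mul]
  -- `k`-normality counts the zeros of the Fourier transform
  have hcount : IsKNormal q n (Finset.univ.filter fun k : ZMod n => dft A ψ k = 0).card α := by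
    convert isKNormal_card_roots q n hnE hζ α using 1
    refine Finset.card_equiv (Equiv.neg _) fun k => ?_
    simp only [Finset.mem_filter, Finset.mem_univ, true_and, Equiv.neg_apply]
    rw [eval_gpoly_eq_zero_iff q n hζ.pow_eq_one, neg_neg]
  have hcoset : ∀ i ∈ Finset.range e, ∀ k ∈ C (i + c), (dft A ψ k = 0 ↔ i ∉ S) := by
    intro i hi k hk
    have hS : i ∉ S ↔ ∑ j ∈ C (i + c), dft A ψ j = 0 := by
      simp only [S, Finset.mem_filter, hi, true_and, not_not]
      rw [sum_dft_coset A ψ hef he hf0 hg hge hC, add_comm, add_eq_zero_iff_eq_neg]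
      simp [hA, hψ, AddChar.zmodChar_apply, add_assoc, map_sum]
    rw [hS]
    constructor
    · intro h
      refine Finset.sum_eq_zero fun j hj => ?_
      obtain ⟨s, rfl⟩ := (hC _ _).1 hk
      obtain ⟨t, rfl⟩ := (hC _ _).1 hj
      -- `q^(f s) = 1` allows moving from `g^(i+c) q^s` to `g^(i+c) q^t` by a positive power of `q`
      have hqf : (q : ZMod n) ^ f = 1 := by rw [← hf]; exact pow_orderOf_eq_one _
      have := dft_mul_eq_zero φ A ψ q hφA hφψ h (t + (f - 1) * s)
      have e1 : s + (t + (f - 1) * s) = f * s + t := by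
        obtain ⟨f', rfl⟩ : ∃ f', f = f' + 1 := ⟨f - 1, by omega⟩
        simp only [Nat.add_sub_cancel]
        ring
      rwa [mul_assoc, ← pow_add, e1, pow_add (q : ZMod n), pow_mul, hqf, one_pow, one_mul] at this
    · intro h
      refine dft_eq_zero_of_sum φ A ψ q hφA hφψ hprim hnE (C (i + c)) ?_
        (mul_right_injective₀ hq0) h hk
      have : (q : ZMod n) ∈ C 0 := (hC _ _).2 ⟨1, by simp⟩
      simpa using image_mul_coset hef he hf0 hg hge hC (i + c) this
  have hunion := biUnion_coset he hg hge hC c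
  have hSe : S ⊆ Finset.range e := Finset.filter_subset _ _
  have hnz : ((Finset.univ.erase (0 : ZMod n)).filter fun k => dft A ψ k = 0).card
      = f * (e - S.card) := by
    have : ((Finset.univ.erase (0 : ZMod n)).filter fun k => dft A ψ k = 0)
        = (Finset.range e \ S).biUnion fun i => C (i + c) := by
      ext k
      rw [← hunion]
      simp only [Finset.mem_filter, Finset.mem_biUnion, Finset.mem_sdiff]
      constructor
      · rintro ⟨⟨i, hi, hk⟩, h⟩
        exact ⟨i, ⟨hi, (hcoset i hi k hk).1 h⟩, hk⟩
      · rintro ⟨i, ⟨hi, hS⟩, hk⟩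
        exact ⟨⟨i, hi, hk⟩, (hcoset i hi k hk).2 hS⟩
    rw [this, Finset.card_biUnion
      fun i hi j hj => coset_disjoint hef hg hge hC c (Finset.mem_sdiff.1 hi).1
        (Finset.mem_sdiff.1 hj).1]
    simp only [card_coset hef he hf0 hg hge hC, Finset.sum_const, smul_eq_mul]
    rw [Finset.card_sdiff_of_subset hSe, Finset.card_range, mul_comm]
  have htr : dft A ψ 0 = 0 ↔ ∑ i ∈ Finset.range n, α ^ q ^ i = 0 := by
    rw [← map_eq_zero (algebraMap FQ E), sum_range_eq_sum_zmod, map_sum]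
    simp [dft, hA]
  have hsplit : (Finset.univ.filter fun k : ZMod n => dft A ψ k = 0).card =
      f * (e - S.card) + if dft A ψ 0 = 0 then 1 else 0 := by
    rw [← hnz, ← Finset.insert_erase (Finset.mem_univ (0 : ZMod n)), Finset.filter_insert]
    split_ifs with h
    · rw [Finset.card_insert_of_notMem (by simp)]
      simp
    · simp
  refine ⟨?_, ?_, ?_⟩
  · rintro ⟨a, rfl⟩
    have ha : a ≠ 0 := by
      rintro rfl
      simp at hα
    refine ⟨?_, isMinPoly_X_sub_one hcard a ha⟩
    have hconst : ∀ k, dft A ψ k = algebraMap FQ E (algebraMap Fq FQ a) * ∑ b, ψ (b * k) := by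
      intro k
      rw [dft, Finset.mul_sum]
      refine Finset.sum_congr rfl fun b _ => ?_
      simp only [hA, ← map_pow]
      rw [← hcard, FiniteField.pow_card_pow]
    have : (Finset.univ.filter fun k : ZMod n => dft A ψ k = 0) = Finset.univ.erase 0 := by
      ext k
      simp only [Finset.mem_filter, Finset.mem_univ, true_and, Finset.mem_erase, and_true]
      rw [hconst, AddChar.sum_mulShift k hprim]
      by_cases hk : k = 0 <;> simp [hk, ha, hnE]
    rw [this, Finset.card_erase_of_mem (Finset.mem_univ _), Finset.card_univ, ZMod.card] at hcount
    exact hcount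
  · rintro ⟨_, h⟩
    rwa [hsplit, if_pos (htr.2 h)] at hcount
  · rintro ⟨_, h⟩
    rwa [hsplit, if_neg (mt htr.1 h), add_zero] at hcount
end
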